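/- arXiv:1808.06513 — 3 statements merged into one kernel-verified Lean document; each statement's English description precedes it below -/
import Mathlib

section
/- Let E ⊆ ℝ⁴ = ℍ×ℝ be precisely monotone and let P ∈ ℝ⁴. If the horizontal plane H_P = {P·(a,b,c,0) : (a,b,c) ∈ ℝ³} is contained in ∂E, then ∂E = H_P. -/
/- The group `ℍ×ℝ`: `ℝ⁴` with coordinates `(x,y,u,t)` and law
`(x,y,u,t)·(x',y',u',t') = (x+x', y+y', u+u', t+t'+2(yx'−y'x))`. -/

noncomputable section

/-- Group law of `ℍ×ℝ` on `ℝ⁴`. -/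
def hmul (p q : Fin 4 → ℝ) : Fin 4 → ℝ :=
  ![p 0 + q 0, p 1 + q 1, p 2 + q 2, p 3 + q 3 + 2 * (p 1 * q 0 - q 1 * p 0)]

/-- Horizontal convexity in `ℍ×ℝ`. -/
def HRConvex (C : Set (Fin 4 → ℝ)) : Prop :=
  ∀ p ∈ C, ∀ a b c : ℝ, hmul p ![a, b, c, 0] ∈ C →
    ∀ s : ℝ, 0 ≤ s → s ≤ 1 → hmul p ![s * a, s * b, s * c, 0] ∈ C

/-- Precise monotonicity in `ℍ×ℝ`. -/
def PreciselyMonotone (E : Set (Fin 4 → ℝ)) : Prop := HRConvex E ∧ HRConvex Eᶜ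

/-!
After a left translation, `H_P` is the hyperplane `{t = 0}`.

If `E` has an interior point `p`, then on a non-vertical horizontal line through `p` and a boundary
point of `E` the two open half-lines at the boundary point lie in the interiors of `E` and of `Eᶜ`.
Every horizontal line that meets `{t = 0}` in one point meets it in a boundary point, and chains of
such lines join any two points off `{t = 0}`. Hence one of the sides of `{t = 0}` is interior to
`E`, and the other one is interior to `Eᶜ`.

It remains to exclude that `E` and `Eᶜ` both have empty interior. Say `0 ∈ E` and `Eᶜ` is dense;
then `E` contains a half-axis. Consider the horizontal lines that start on it, parametrized by
`ℝ³`. By convexity of `E`, a line that has left `E` stays outside, so by density a dense set of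
these lines has left `E` at `y = 1`. By convexity of `Eᶜ`, the set of lines that have left `E`
at `y` contains the segment between two of its members whose points at `y` are horizontally linked.
Starting from four affinely independent lines, whose pairwise linking parameters are suitably
ordered, one fills the tetrahedron that they span, and thus obtains an open subset of `Eᶜ`.
-/

open AffineMap Filter Set Topology

/-! ### Horizontal links -/

/-- Two points of `ℍ×ℝ` are horizontally linked if one lies in the horizontal plane of the other.
Horizontal lines are Euclidean lines, so this says that the Euclidean line through the two points
is horizontal. -/
def HorizontallyLinked (p q : Fin 4 → ℝ) : Prop :=
  q 3 = p 3 + 2 * (p 1 * q 0 - q 1 * p 0)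

theorem horizontallyLinked_iff_exists_eq_hmul {p q : Fin 4 → ℝ} :
    HorizontallyLinked p q ↔ ∃ a b c : ℝ, q = hmul p ![a, b, c, 0] := by
  constructor
  · intro h
    refine ⟨q 0 - p 0, q 1 - p 1, q 2 - p 2, ?_⟩
    unfold HorizontallyLinked at h
    ext i
    fin_cases i <;> simp [hmul]
    linarith
  · rintro ⟨a, b, c, rfl⟩
    simp only [HorizontallyLinked, hmul, Matrix.cons_val]
    ring

namespace HorizontallyLinked

variable {p q : Fin 4 → ℝ}

theorem symm (h : HorizontallyLinked p q) : HorizontallyLinked q p := by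
  unfold HorizontallyLinked at *
  linarith

theorem lineMap_lineMap (h : HorizontallyLinked p q) (r s : ℝ) :
    HorizontallyLinked (lineMap p q r) (lineMap p q s) := by
  simp only [HorizontallyLinked, pi_lineMap_apply, lineMap_apply_ring'] at *
  linear_combination (s - r) * h

theorem left_lineMap (h : HorizontallyLinked p q) (s : ℝ) :
    HorizontallyLinked p (lineMap p q s) := by
  simpa using h.lineMap_lineMap 0 s

theorem lineMap_right (h : HorizontallyLinked p q) (s : ℝ) :
    HorizontallyLinked (lineMap p q s) q := by
  simpa using h.lineMap_lineMap s 1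

theorem ne_or_ne_of_height_ne (h : HorizontallyLinked p q) (hpq : p 3 ≠ q 3) :
    p 0 ≠ q 0 ∨ p 1 ≠ q 1 := by
  by_contra! heq
  apply hpq
  rw [h, heq.1, heq.2]
  ring

theorem exists_height_zero_lineMap_eq (h : HorizontallyLinked p q) (hp : p 3 ≠ 0)
    (hpq : p 3 ≠ q 3) :
    ∃ w : Fin 4 → ℝ, w 3 = 0 ∧ HorizontallyLinked w p ∧ lineMap w p (q 3 / p 3) = q := by
  have hd : p 3 - q 3 ≠ 0 := sub_ne_zero.2 hpq
  refine ⟨lineMap p q (p 3 / (p 3 - q 3)), ?_, (h.left_lineMap _).symm, ?_⟩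
  · rw [pi_lineMap_apply, lineMap_apply_ring']
    field_simp
    ring
  · ext i
    simp only [pi_lineMap_apply, lineMap_apply_ring']
    field_simp
    ring

end HorizontallyLinked

theorem exists_horizontallyLinked_of_det_ne_zero {p q : Fin 4 → ℝ}
    (hdet : p 0 * q 1 - p 1 * q 0 ≠ 0) (t : ℝ) :
    ∃ m : Fin 4 → ℝ, m 3 = t ∧ HorizontallyLinked p m ∧ HorizontallyLinked m q := by
  set d := p 0 * q 1 - p 1 * q 0 with hd
  refine ⟨![(p 0 * (t - q 3) - q 0 * (t - p 3)) / (2 * d),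
    (p 1 * (t - q 3) - q 1 * (t - p 3)) / (2 * d), 0, t], rfl, ?_, ?_⟩
  all_goals
    simp only [HorizontallyLinked, Matrix.cons_val]
    field_simp
    rw [hd]
    ring

theorem exists_mem_det_ne_zero {O : Set (Fin 4 → ℝ)} (hO : IsOpen O) {p q : Fin 4 → ℝ}
    (hp : p ∈ O) (hq : q 0 ≠ 0 ∨ q 1 ≠ 0) :
    ∃ p' ∈ O, p' 3 = p 3 ∧ p' 0 * q 1 - p' 1 * q 0 ≠ 0 := by
  by_cases hdet : p 0 * q 1 - p 1 * q 0 = 0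
  · let shift (s : ℝ) : Fin 4 → ℝ := p + s • ![q 1, -q 0, 0, 0]
    have hcont : Continuous shift := by fun_prop
    have hnear : ∀ᶠ s in 𝓝[≠] (0 : ℝ), shift s ∈ O :=
      ((hcont.tendsto' 0 p (by simp only [shift, zero_smul, add_zero])).eventually_mem
        (hO.mem_nhds hp)).filter_mono nhdsWithin_le_nhds
    obtain ⟨s, hs, hs0⟩ := (hnear.and self_mem_nhdsWithin).exists
    refine ⟨shift s, hs, ?_, ?_⟩
    · simp only [shift, Pi.add_apply, Pi.smul_apply, Matrix.cons_val, smul_zero, add_zero]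
    have hshift : shift s 0 * q 1 - shift s 1 * q 0 = s * (q 0 ^ 2 + q 1 ^ 2) := by
      simp only [shift, Pi.add_apply, Pi.smul_apply, Matrix.cons_val, smul_eq_mul]
      linear_combination hdet
    rw [hshift]
    refine mul_ne_zero hs0 (ne_of_gt ?_)
    rcases hq with h | h <;> positivity
  · exact ⟨p, hp, rfl, hdet⟩

namespace HRConvex

variable {C : Set (Fin 4 → ℝ)} {p q : Fin 4 → ℝ}

theorem lineMap_mem (hC : HRConvex C) (hp : p ∈ C) (hq : q ∈ C) (h : HorizontallyLinked p q)
    {s : ℝ} (hs : s ∈ Icc (0 : ℝ) 1) : lineMap p q s ∈ C := by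
  obtain ⟨a, b, c, rfl⟩ := horizontallyLinked_iff_exists_eq_hmul.1 h
  convert! hC p hp a b c hq s hs.1 hs.2 using 1
  ext i
  fin_cases i <;> simp [pi_lineMap_apply, lineMap_apply_ring', hmul] <;> ring

theorem mem_of_lineMap_mem (hC : HRConvex C) (hp : p ∈ C) (h : HorizontallyLinked p q)
    {s : ℝ} (hs : 1 ≤ s) (hq : lineMap p q s ∈ C) : q ∈ C := by
  have hmem := hC.lineMap_mem hp hq (h.left_lineMap s)
    ⟨inv_nonneg.2 (zero_le_one.trans hs), inv_le_one_of_one_le₀ hs⟩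
  rwa [lineMap_lineMap_right, inv_mul_cancel₀ (by positivity), lineMap_apply_one] at hmem

theorem forall_lineMap_notMem_of_notMem (hC : HRConvex C) (hp : p ∉ C)
    (h : HorizontallyLinked p q) :
    (∀ s : ℝ, 0 ≤ s → lineMap p q s ∉ C) ∨ ∀ s : ℝ, s ≤ 0 → lineMap p q s ∉ C := by
  by_contra! hcross
  obtain ⟨⟨s, hs, hsC⟩, r, hr, hrC⟩ := hcross
  obtain ⟨k, hk, hk0⟩ : (0 : ℝ) ∈ lineMap r s '' Icc (0 : ℝ) 1 := by
    rw [← segment_eq_image_lineMap, segment_eq_Icc (hr.trans hs)]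
    exact ⟨hr, hs⟩
  refine hp ?_
  have hmem := hC.lineMap_mem hrC hsC (h.lineMap_lineMap r s) hk
  rwa [← apply_lineMap, hk0, lineMap_apply_zero] at hmem

end HRConvex

/-! ### Open segments ending in the interior -/

/-- A point horizontally linked to both `p` and `r`: the Euclidean midpoint of `p` and `r`, with
its `(x, y)`-projection displaced orthogonally to that of `r - p`. It is only meaningful if the
`(x, y)`-projections of `p` and `r` differ; otherwise `k` is a division by zero. -/
def bridge (p r : Fin 4 → ℝ) : Fin 4 → ℝ :=
  let k := (p 3 + 2 * (p 1 * r 0 - r 1 * p 0) - r 3) / (2 * ((r 0 - p 0) ^ 2 + (r 1 - p 1) ^ 2))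
  let x := (p 0 + r 0) / 2 + k * (r 1 - p 1)
  let y := (p 1 + r 1) / 2 - k * (r 0 - p 0)
  ![x, y, (p 2 + r 2) / 2, p 3 + 2 * (p 1 * x - y * p 0)]

theorem sq_add_sq_ne_zero_of_ne_or_ne {a b c d : ℝ} (h : a ≠ c ∨ b ≠ d) :
    (c - a) ^ 2 + (d - b) ^ 2 ≠ 0 := by
  rcases h with h | h
  · have := sub_ne_zero.2 h.symm; positivity
  · have := sub_ne_zero.2 h.symm; positivity

theorem horizontallyLinked_bridge_left (p r : Fin 4 → ℝ) : HorizontallyLinked p (bridge p r) := by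
  simp [HorizontallyLinked, bridge]

theorem horizontallyLinked_bridge_right {p r : Fin 4 → ℝ} (h : p 0 ≠ r 0 ∨ p 1 ≠ r 1) :
    HorizontallyLinked (bridge p r) r := by
  have hden := sq_add_sq_ne_zero_of_ne_or_ne h
  simp only [HorizontallyLinked, bridge, Matrix.cons_val]
  field_simp
  ring

theorem HorizontallyLinked.bridge_eq_lineMap {p r : Fin 4 → ℝ} (h : HorizontallyLinked p r) :
    bridge p r = lineMap p r (1 / 2 : ℝ) := by
  unfold HorizontallyLinked at h
  ext i
  fin_cases i <;> simp [bridge, h, pi_lineMap_apply, lineMap_apply_ring'] <;> ring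

theorem continuousAt_bridge {p r : Fin 4 → ℝ} (h : p 0 ≠ r 0 ∨ p 1 ≠ r 1) :
    ContinuousAt (fun z : (Fin 4 → ℝ) × (Fin 4 → ℝ) ↦ bridge z.1 z.2) (p, r) := by
  have hden := sq_add_sq_ne_zero_of_ne_or_ne h
  refine continuousAt_pi.2 fun i ↦ ?_
  fin_cases i <;> simp only [bridge] <;> fun_prop (disch := simp [hden])

theorem HorizontallyLinked.lineMap_left_bridge {p q : Fin 4 → ℝ} (h : HorizontallyLinked p q)
    {s : ℝ} (hs : s ≠ 0) : lineMap p (bridge p (lineMap p q s)) (2 / s) = q := by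
  rw [(h.left_lineMap s).bridge_eq_lineMap, lineMap_lineMap_right, lineMap_lineMap_right,
    show 2 / s * (1 / 2) * s = 1 by field_simp, lineMap_apply_one]

theorem HorizontallyLinked.lineMap_bridge_right {p q : Fin 4 → ℝ} (h : HorizontallyLinked p q)
    {s : ℝ} (hs : s ≠ 0) :
    lineMap (bridge p (lineMap p q s)) (lineMap p q s) (2 / s - 1) = q := by
  rw [(h.left_lineMap s).bridge_eq_lineMap]
  ext i
  simp only [pi_lineMap_apply, lineMap_apply_ring']
  field_simp
  ring

theorem HRConvex.lineMap_mem_interior {C : Set (Fin 4 → ℝ)} {p q : Fin 4 → ℝ} (hC : HRConvex C)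
    (hp : p ∈ closure C) (hq : q ∈ interior C) (h : HorizontallyLinked p q)
    (hne : p 0 ≠ q 0 ∨ p 1 ≠ q 1) {s : ℝ} (hs : s ∈ Ioo (0 : ℝ) 1) :
    lineMap p q s ∈ interior C := by
  obtain ⟨hs0, hs1⟩ := hs
  have hs2 : 2 ≤ 2 / s := by rw [le_div_iff₀ hs0]; linarith
  set r := lineMap p q s with hr
  have hner : p 0 ≠ r 0 ∨ p 1 ≠ r 1 := by
    simpa [hr, pi_lineMap_apply, eq_comm (a := p _), lineMap_eq_left_iff, hs0.ne'] using hne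
  have hcont := continuousAt_bridge hner
  -- For `z` near `(p, r)`, both legs of the path through the bridge prolong into `interior C`.
  have hfirst : ∀ᶠ z in 𝓝 (p, r), lineMap z.1 (bridge z.1 z.2) (2 / s) ∈ interior C :=
    (continuousAt_fst.lineMap hcont continuousAt_const).eventually_mem
      (isOpen_interior.mem_nhds ((h.lineMap_left_bridge hs0.ne').symm ▸ hq))
  have hsecond : ∀ᶠ z in 𝓝 (p, r), lineMap (bridge z.1 z.2) z.2 (2 / s - 1) ∈ interior C :=
    (hcont.lineMap continuousAt_snd continuousAt_const).eventually_mem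
      (isOpen_interior.mem_nhds ((h.lineMap_bridge_right hs0.ne').symm ▸ hq))
  have hneighbors : ∀ᶠ z in 𝓝 (p, r), z.1 0 ≠ z.2 0 ∨ z.1 1 ≠ z.2 1 :=
    ((isOpen_ne_fun (by fun_prop) (by fun_prop)).union
      (isOpen_ne_fun (by fun_prop) (by fun_prop))).eventually_mem hner
  obtain ⟨p', hp', hnear⟩ := ((mem_closure_iff_frequently.1 hp).and_eventually
    (hfirst.and (hsecond.and hneighbors)).curry_nhds).exists
  refine mem_interior_iff_mem_nhds.2 (hnear.mono fun r' ⟨ha, hb, hne'⟩ ↦ ?_)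
  have hm : bridge p' r' ∈ C := hC.mem_of_lineMap_mem hp' (horizontallyLinked_bridge_left p' r')
    (by linarith) (interior_subset ha)
  exact hC.mem_of_lineMap_mem hm (horizontallyLinked_bridge_right hne') (by linarith)
    (interior_subset hb)

/-! ### Boundaries containing the hyperplane of height zero -/

namespace PreciselyMonotone

variable {E : Set (Fin 4 → ℝ)} {p q : Fin 4 → ℝ}

theorem compl (hE : PreciselyMonotone E) : PreciselyMonotone Eᶜ :=
  ⟨hE.2, by rw [compl_compl]; exact hE.1⟩

theorem lineMap_mem_interior_compl_of_neg (hE : PreciselyMonotone E) (hp : p ∈ frontier E)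
    (hq : q ∈ interior E) (h : HorizontallyLinked p q) (hne : p 0 ≠ q 0 ∨ p 1 ≠ q 1)
    {s : ℝ} (hs : s < 0) : lineMap p q s ∈ interior Eᶜ := by
  by_contra hr
  rw [interior_compl, notMem_compl_iff] at hr
  have hs1 : 0 < 1 - s := by linarith
  have hner : lineMap p q s 0 ≠ q 0 ∨ lineMap p q s 1 ≠ q 1 := by
    simpa [pi_lineMap_apply, lineMap_eq_right_iff, (hs.trans one_pos).ne] using hne
  have hmem := hE.1.lineMap_mem_interior hr hq (h.lineMap_right s) hner (s := -s / (1 - s))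
    ⟨by have := neg_pos.2 hs; positivity, by rw [div_lt_one hs1]; linarith⟩
  have hback : lineMap (lineMap p q s) q (-s / (1 - s)) = p := by
    ext i
    simp only [pi_lineMap_apply, lineMap_apply_ring']
    field_simp
    ring
  exact hp.2 (hback ▸ hmem)

theorem lineMap_mem_interior_of_pos (hE : PreciselyMonotone E) (hp : p ∈ frontier E)
    (hq : q ∈ interior E) (h : HorizontallyLinked p q) (hne : p 0 ≠ q 0 ∨ p 1 ≠ q 1)
    {s : ℝ} (hs : 0 < s) : lineMap p q s ∈ interior E := by
  have hopp := hE.lineMap_mem_interior_compl_of_neg hp hq h hne (s := -1) (by norm_num)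
  have hne' : p 0 ≠ lineMap p q (-1 : ℝ) 0 ∨ p 1 ≠ lineMap p q (-1 : ℝ) 1 := by
    simpa [pi_lineMap_apply, eq_comm (a := p _)] using hne
  simpa using hE.compl.lineMap_mem_interior_compl_of_neg (frontier_compl E ▸ hp) hopp
    (h.left_lineMap _) hne' (neg_lt_zero.2 hs)

theorem mem_interior_compl_of_horizontallyLinked (hE : PreciselyMonotone E)
    (h0 : {w : Fin 4 → ℝ | w 3 = 0} ⊆ frontier E) (hp : p ∈ interior E) (h : HorizontallyLinked p q)
    (hpq : p 3 * q 3 < 0) : q ∈ interior Eᶜ := by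
  have hp3 : p 3 ≠ 0 := left_ne_zero_of_mul hpq.ne
  have hratio : q 3 / p 3 < 0 := by
    rw [mul_neg_iff] at hpq
    rw [div_neg_iff]
    tauto
  obtain ⟨w, hw, hwp, hwq⟩ := h.exists_height_zero_lineMap_eq hp3
    fun heq ↦ (mul_self_nonneg (q 3)).not_gt (heq ▸ hpq)
  rw [← hwq]
  exact hE.lineMap_mem_interior_compl_of_neg (h0 hw) hp hwp
    (hwp.ne_or_ne_of_height_ne (hw ▸ hp3.symm)) hratio

theorem mem_interior_of_horizontallyLinked (hE : PreciselyMonotone E)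
    (h0 : {w : Fin 4 → ℝ | w 3 = 0} ⊆ frontier E) (hp : p ∈ interior E) (h : HorizontallyLinked p q)
    (hpq : 0 < p 3 * q 3) (hne : p 3 ≠ q 3) : q ∈ interior E := by
  have hp3 : p 3 ≠ 0 := left_ne_zero_of_mul hpq.ne'
  have hratio : 0 < q 3 / p 3 := by
    rw [mul_pos_iff] at hpq
    rw [div_pos_iff]
    tauto
  obtain ⟨w, hw, hwp, hwq⟩ := h.exists_height_zero_lineMap_eq hp3 hne
  rw [← hwq]
  exact hE.lineMap_mem_interior_of_pos (h0 hw) hp hwp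
    (hwp.ne_or_ne_of_height_ne (hw ▸ hp3.symm)) hratio

theorem mem_interior_of_height_mul_pos_of_ne (hE : PreciselyMonotone E)
    (h0 : {w : Fin 4 → ℝ | w 3 = 0} ⊆ frontier E) (hp : p ∈ interior E) (hpq : 0 < p 3 * q 3)
    (hq : q 0 ≠ 0 ∨ q 1 ≠ 0) : q ∈ interior E := by
  obtain ⟨p', hp', hheight, hdet⟩ := exists_mem_det_ne_zero isOpen_interior hp hq
  rw [← hheight] at hpq
  have hp3 : p' 3 ≠ 0 := left_ne_zero_of_mul hpq.ne'
  have hq3 : q 3 ≠ 0 := right_ne_zero_of_mul hpq.ne'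
  obtain ⟨m, hm, hpm, hmq⟩ := exists_horizontallyLinked_of_det_ne_zero hdet (p' 3 + q 3)
  have hm_mem : m ∈ interior E := hE.mem_interior_of_horizontallyLinked h0 hp' hpm
    (by rw [hm]; nlinarith [sq_nonneg (p' 3)]) (by simpa [hm] using hq3)
  exact hE.mem_interior_of_horizontallyLinked h0 hm_mem hmq
    (by rw [hm]; nlinarith [sq_nonneg (q 3)]) (by simpa [hm] using hp3)

theorem mem_interior_of_height_mul_pos (hE : PreciselyMonotone E)
    (h0 : {w : Fin 4 → ℝ | w 3 = 0} ⊆ frontier E) (hp : p ∈ interior E) (hpq : 0 < p 3 * q 3) :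
    q ∈ interior E := by
  by_cases hq : q 0 ≠ 0 ∨ q 1 ≠ 0
  · exact hE.mem_interior_of_height_mul_pos_of_ne h0 hp hpq hq
  · push Not at hq
    have hright : ![1, 0, q 2, q 3] ∈ interior E :=
      hE.mem_interior_of_height_mul_pos_of_ne h0 hp hpq (by simp)
    have hleft : ![-1, 0, q 2, q 3] ∈ interior E :=
      hE.mem_interior_of_height_mul_pos_of_ne h0 hp hpq (by simp)
    have hmid : lineMap ![-1, 0, q 2, q 3] ![1, 0, q 2, q 3] (1 / 2 : ℝ) = q := by
      ext i
      fin_cases i <;> simp [pi_lineMap_apply, lineMap_apply_ring', hq]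
      norm_num
    rw [← hmid]
    exact hE.1.lineMap_mem_interior (subset_closure (interior_subset hleft)) hright
      (by simp [HorizontallyLinked]) (by norm_num) (by norm_num)

theorem frontier_subset_of_interior_nonempty (hE : PreciselyMonotone E)
    (h0 : {w : Fin 4 → ℝ | w 3 = 0} ⊆ frontier E) (hint : (interior E).Nonempty) :
    frontier E ⊆ {w : Fin 4 → ℝ | w 3 = 0} := by
  obtain ⟨p, hp⟩ := hint
  have hp3 : p 3 ≠ 0 := fun h ↦ (h0 h).2 hp
  have hq : ![1, 0, 0, p 3] ∈ interior E :=
    hE.mem_interior_of_height_mul_pos h0 hp (mul_self_pos.2 hp3)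
  have hr : ![0, p 3, 0, -p 3] ∈ interior Eᶜ :=
    hE.mem_interior_compl_of_horizontallyLinked h0 hq
      (by simp only [HorizontallyLinked, Matrix.cons_val]; ring)
      (by simpa using hp3)
  intro z hz
  by_contra hz3
  rcases (mul_ne_zero hp3 hz3).lt_or_gt with hneg | hpos
  · rw [← frontier_compl] at hz h0
    exact hz.2 (hE.compl.mem_interior_of_height_mul_pos h0 hr (by simpa using hneg))
  · exact hz.2 (hE.mem_interior_of_height_mul_pos h0 hp hpos)

end PreciselyMonotone

/-! ### Existence of interior points -/

/-- The point with second coordinate `y` on the horizontal line through `(v 0, 0, 0, 0)` with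
direction `(v 1, 1, v 2)`. The vector `v` parametrizes the horizontal lines that cross the
`x`-axis transversally to `{y = 0}`. -/
def rayPoint (v : Fin 3 → ℝ) (y : ℝ) : Fin 4 → ℝ :=
  ![v 0 + v 1 * y, y, v 2 * y, -2 * y * v 0]

theorem rayPoint_lineMap_left (v w : Fin 3 → ℝ) (y s : ℝ) :
    rayPoint (lineMap v w s) y = lineMap (rayPoint v y) (rayPoint w y) s := by
  ext i
  fin_cases i <;> simp [rayPoint, pi_lineMap_apply, lineMap_apply_ring'] <;> ring

theorem rayPoint_lineMap_right (v : Fin 3 → ℝ) (y z s : ℝ) :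
    rayPoint v (lineMap y z s) = lineMap (rayPoint v y) (rayPoint v z) s := by
  ext i
  fin_cases i <;> simp [rayPoint, pi_lineMap_apply, lineMap_apply_ring'] <;> ring

theorem rayPoint_zero (v : Fin 3 → ℝ) : rayPoint v 0 = lineMap 0 ![1, 0, 0, 0] (v 0) := by
  ext i
  fin_cases i <;> simp [rayPoint, pi_lineMap_apply, lineMap_apply_ring']

theorem horizontallyLinked_rayPoint_right (v : Fin 3 → ℝ) (y z : ℝ) :
    HorizontallyLinked (rayPoint v y) (rayPoint v z) := by
  simp only [HorizontallyLinked, rayPoint, Matrix.cons_val]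
  ring

theorem horizontallyLinked_rayPoint_left {v w : Fin 3 → ℝ} {y : ℝ}
    (h : y = 0 ∨ y * (w 1 - v 1) = 2 * (v 0 - w 0)) :
    HorizontallyLinked (rayPoint v y) (rayPoint w y) := by
  simp only [HorizontallyLinked, rayPoint, Matrix.cons_val]
  rcases h with rfl | h
  · ring
  · linear_combination (-2 * y) * h

theorem isOpen_image2_rayPoint {U : Set (Fin 3 → ℝ)} {I : Set ℝ} (hU : IsOpen U) (hI : IsOpen I)
    (h0 : 0 ∉ I) : IsOpen (image2 rayPoint U I) := by
  let line (z : Fin 4 → ℝ) : Fin 3 → ℝ :=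
    ![-z 3 / (2 * z 1), (z 0 + z 3 / (2 * z 1)) / z 1, z 2 / z 1]
  have hline : ContinuousOn line {z | z 1 ∈ I} := by
    refine continuousOn_pi.2 fun i ↦ ?_
    have hne (z : Fin 4 → ℝ) (hz : z 1 ∈ I) : z 1 ≠ 0 := ne_of_mem_of_not_mem hz h0
    fin_cases i <;> simp only [line] <;> fun_prop (disch := simpa using hne)
  have himage : image2 rayPoint U I = {z | z 1 ∈ I} ∩ line ⁻¹' U := by
    ext z
    constructor
    · rintro ⟨v, hv, y, hy, rfl⟩
      have hy0 : y ≠ 0 := ne_of_mem_of_not_mem hy h0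
      have hv' : line (rayPoint v y) = v := by
        ext i
        fin_cases i <;> simp [line, rayPoint] <;> field_simp
        ring
      exact ⟨hy, by rwa [mem_preimage, hv']⟩
    · rintro ⟨hy, hv⟩
      have hy0 : z 1 ≠ 0 := ne_of_mem_of_not_mem hy h0
      refine ⟨line z, hv, z 1, hy, ?_⟩
      ext i
      fin_cases i <;> simp [line, rayPoint] <;> field_simp
      ring
  rw [himage]
  exact hline.isOpen_inter_preimage (hI.preimage (continuous_apply 1)) hU

/-- The parameters of the horizontal lines whose point on the `x`-axis lies in `E` and whose point
with second coordinate `y` does not. -/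
def exitSet (E : Set (Fin 4 → ℝ)) (y : ℝ) : Set (Fin 3 → ℝ) :=
  {v | rayPoint v 0 ∈ E ∧ rayPoint v y ∉ E}

/-- The parameters `v` of horizontal lines for which the `y` with `rayPoint v y` horizontally
linked to `rayPoint w y` lies strictly between `a` and `b` (if `a < b`). -/
def slopeCone (a b : ℝ) (w : Fin 3 → ℝ) : Set (Fin 3 → ℝ) :=
  {v | a * (w 1 - v 1) < 2 * (v 0 - w 0) ∧ 2 * (v 0 - w 0) < b * (w 1 - v 1)}

theorem convex_slopeCone (a b : ℝ) (w : Fin 3 → ℝ) : Convex ℝ (slopeCone a b w) := by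
  rintro u ⟨hu, hu'⟩ v ⟨hv, hv'⟩ r s hr hs hrs
  obtain rfl : r = 1 - s := by linarith
  simp only [slopeCone, mem_ofPred_eq, Pi.add_apply, Pi.smul_apply, smul_eq_mul]
  constructor
  · rcases hr.eq_or_lt with h | h <;> nlinarith
  · rcases hr.eq_or_lt with h | h <;> nlinarith

theorem HRConvex.exitSet_subset_exitSet {E : Set (Fin 4 → ℝ)} (hE : HRConvex E) {y z : ℝ}
    (hy : 0 ≤ y) (hyz : y ≤ z) : exitSet E y ⊆ exitSet E z := by
  rintro v ⟨hbase, hexit⟩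
  refine ⟨hbase, fun hz ↦ hexit ?_⟩
  obtain ⟨s, hs, hsy⟩ : y ∈ lineMap 0 z '' Icc (0 : ℝ) 1 := by
    rw [← segment_eq_image_lineMap, segment_eq_Icc (hy.trans hyz)]
    exact ⟨hy, hyz⟩
  rw [← hsy, rayPoint_lineMap_right]
  exact hE.lineMap_mem hbase hz (horizontallyLinked_rayPoint_right v 0 z) hs

theorem HRConvex.mem_closure_exitSet {E : Set (Fin 4 → ℝ)} (hE : HRConvex E)
    (hint : interior E = ∅) {v : Fin 3 → ℝ} (hv : ∀ᶠ u in 𝓝 v, rayPoint u 0 ∈ E) {y : ℝ}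
    (hy : 0 < y) : v ∈ closure (exitSet E y) := by
  refine mem_closure_iff_nhds.2 fun U hU ↦ ?_
  obtain ⟨V, hVsub, hVopen, hvV⟩ := mem_nhds_iff.1 (inter_mem hU hv)
  have hdense : Dense Eᶜ := interior_eq_empty_iff_dense_compl.1 hint
  obtain ⟨_, ⟨u, hu, z, hz, rfl⟩, hout⟩ := hdense.inter_open_nonempty _
    (isOpen_image2_rayPoint hVopen (isOpen_Ioo (a := 0) (b := y)) (by simp))
    (.image2 ⟨v, hvV⟩ (nonempty_Ioo.2 hy))
  exact ⟨u, (hVsub hu).1, hE.exitSet_subset_exitSet hz.1.le hz.2.le ⟨(hVsub hu).2, hout⟩⟩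

theorem HRConvex.interior_compl_nonempty_of_interior_exitSet_nonempty {E : Set (Fin 4 → ℝ)}
    (hE : HRConvex E) {y : ℝ} (hy : 0 ≤ y) (h : (interior (exitSet E y)).Nonempty) :
    (interior Eᶜ).Nonempty := by
  have hsub : image2 rayPoint (interior (exitSet E y)) (Ioo y (y + 1)) ⊆ Eᶜ := by
    rintro _ ⟨v, hv, z, hz, rfl⟩
    exact (hE.exitSet_subset_exitSet hy hz.1.le (interior_subset hv)).2
  have hopen : IsOpen (image2 rayPoint (interior (exitSet E y)) (Ioo y (y + 1))) :=
    isOpen_image2_rayPoint isOpen_interior isOpen_Ioo fun h0 ↦ h0.1.not_ge hy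
  exact (h.image2 (nonempty_Ioo.2 (lt_add_one y))).mono (hopen.subset_interior_iff.2 hsub)

namespace PreciselyMonotone

variable {E : Set (Fin 4 → ℝ)}

theorem segment_subset_exitSet (hE : PreciselyMonotone E) {v w : Fin 3 → ℝ} {y : ℝ}
    (hv : v ∈ exitSet E y) (hw : w ∈ exitSet E y) (h : y * (w 1 - v 1) = 2 * (v 0 - w 0)) :
    segment ℝ v w ⊆ exitSet E y := by
  rw [segment_eq_image_lineMap]
  rintro _ ⟨s, hs, rfl⟩
  constructor <;> rw [rayPoint_lineMap_left]
  · exact hE.1.lineMap_mem hv.1 hw.1 (horizontallyLinked_rayPoint_left (.inl rfl)) hs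
  · exact hE.2.lineMap_mem hv.2 hw.2 (horizontallyLinked_rayPoint_left (.inr h)) hs

theorem segment_subset_exitSet_of_mem_slopeCone (hE : PreciselyMonotone E) {v w : Fin 3 → ℝ}
    {a b : ℝ} (ha : 0 ≤ a) (hab : a ≤ b) (hv : v ∈ exitSet E a) (hw : w ∈ exitSet E a)
    (h : v ∈ slopeCone a b w) : segment ℝ v w ⊆ exitSet E b := by
  obtain ⟨hlow, hhigh⟩ := h
  have hpos : 0 < w 1 - v 1 := by nlinarith
  set y := 2 * (v 0 - w 0) / (w 1 - v 1)
  have hay : a ≤ y := ((lt_div_iff₀ hpos).2 hlow).le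
  have hyb : y ≤ b := ((div_lt_iff₀ hpos).2 hhigh).le
  have hmono := hE.1.exitSet_subset_exitSet ha hay
  exact (hE.segment_subset_exitSet (hmono hv) (hmono hw) (div_mul_cancel₀ _ hpos.ne')).trans
    (hE.1.exitSet_subset_exitSet (ha.trans hay) hyb)

theorem convexHull_range_subset_exitSet (hE : PreciselyMonotone E) {y : ℕ → ℝ} (hy : Monotone y)
    (hy0 : 0 ≤ y 0) {n : ℕ} (w : Fin n → Fin 3 → ℝ) (hw : ∀ i, w i ∈ exitSet E (y 0))
    (hslope : ∀ i j : Fin n, i < j → w i ∈ slopeCone (y j) (y (j + 1)) (w j)) :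
    convexHull ℝ (range w) ⊆ exitSet E (y n) := by
  induction n with
  | zero => simp
  | succ n ih =>
    have hhull := ih (Fin.init w) (fun i ↦ hw _) fun i j hij ↦
      hslope i.castSucc j.castSucc hij
    have hcone : convexHull ℝ (range (Fin.init w)) ⊆
        slopeCone (y n) (y (n + 1)) (w (Fin.last n)) :=
      convexHull_min (range_subset_iff.2 fun i ↦ hslope _ _ i.castSucc_lt_last)
        (convex_slopeCone _ _ _)
    have hyn : 0 ≤ y n := hy0.trans (hy n.zero_le)
    have hlast : w (Fin.last n) ∈ exitSet E (y n) :=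
      hE.1.exitSet_subset_exitSet hy0 (hy n.zero_le) (hw _)
    rw [← Fin.snoc_init_self w, Fin.range_snoc]
    rcases (range (Fin.init w)).eq_empty_or_nonempty with hempty | hne
    · rw [hempty, insert_empty_eq, convexHull_singleton, singleton_subset_iff]
      exact hE.1.exitSet_subset_exitSet hyn (hy n.le_succ) hlast
    · rw [convexHull_insert hne]
      intro x hx
      obtain ⟨_, rfl, v, hv, hx⟩ := mem_convexJoin.1 hx
      rw [segment_symm] at hx
      exact hE.segment_subset_exitSet_of_mem_slopeCone hyn (hy n.le_succ) (hhull hv) hlast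
        (hcone hv) hx

end PreciselyMonotone

/-- Points on a moment curve, shifted by `σ` along the `x`-axis. The lines with parameters
`momentPoint σ i` and `momentPoint σ j` are horizontally linked at `y = 2 ^ i + 2 ^ j`, which for
`i < j` lies between `2 ^ j` and `2 ^ (j + 1)`. -/
def momentPoint (σ : ℝ) (j : ℕ) : Fin 3 → ℝ :=
  ![σ - 4 ^ j / 2, 2 ^ j, 8 ^ j]

theorem momentPoint_mem_slopeCone (σ : ℝ) {i j : ℕ} (hij : i < j) :
    momentPoint σ i ∈ slopeCone (2 ^ j) (2 ^ (j + 1)) (momentPoint σ j) := by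
  have hlt : (2 : ℝ) ^ i < 2 ^ j := pow_lt_pow_right₀ one_lt_two hij
  have hpos : (0 : ℝ) < 2 ^ i := by positivity
  have hsq (k : ℕ) : (4 : ℝ) ^ k = (2 ^ k) ^ 2 := by rw [← pow_mul, mul_comm, pow_mul]; norm_num
  simp only [momentPoint, slopeCone, mem_ofPred_eq, Matrix.cons_val, hsq, pow_succ]
  constructor <;> nlinarith

theorem affineIndependent_momentPoint (σ : ℝ) :
    AffineIndependent ℝ fun j : Fin 4 ↦ momentPoint σ j := by
  rw [affineIndependent_iff_of_fintype]
  intro c hsum hcomb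
  rw [Finset.weightedVSub_eq_linear_combination _ hsum] at hcomb
  have hcoord (k : Fin 3) : ∑ i, c i * momentPoint σ i k = 0 := by simpa using congrFun hcomb k
  simp only [Fin.sum_univ_four] at hsum hcoord
  have hlin : c 0 + 2 * c 1 + 4 * c 2 + 8 * c 3 = 0 := by
    have h := hcoord 1
    norm_num [momentPoint] at h
    linear_combination h
  have hquad : c 0 + 4 * c 1 + 16 * c 2 + 64 * c 3 = 0 := by
    have h := hcoord 0
    norm_num [momentPoint] at h
    linear_combination 2 * σ * hsum - 2 * h
  have hcubic : c 0 + 8 * c 1 + 64 * c 2 + 512 * c 3 = 0 := by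
    have h := hcoord 2
    simp only [momentPoint, Matrix.cons_val] at h
    norm_num at h
    linear_combination h
  intro i
  fin_cases i <;> simp only [Fin.reduceFinMk, Fin.zero_eta] <;> linarith

theorem isOpen_setOf_mem_slopeCone (a b : ℝ) :
    IsOpen {z : (Fin 3 → ℝ) × (Fin 3 → ℝ) | z.1 ∈ slopeCone a b z.2} := by
  simp only [slopeCone, ofPred_and]
  exact (isOpen_lt (by fun_prop) (by fun_prop)).inter (isOpen_lt (by fun_prop) (by fun_prop))

theorem eventually_nhds_momentPoint (σ : ℝ) :
    ∀ᶠ w in 𝓝 fun j : Fin 4 ↦ momentPoint σ j, AffineIndependent ℝ w ∧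
      ∀ i j : Fin 4, i < j → w i ∈ slopeCone (2 ^ (j : ℕ)) (2 ^ (j + 1 : ℕ)) (w j) := by
  refine (isOpen_setOfPred_affineIndependent.eventually_mem
    (affineIndependent_momentPoint σ)).and ?_
  simp only [eventually_all]
  intro i j hij
  have hcont : Continuous fun w : Fin 4 → Fin 3 → ℝ ↦ (w i, w j) := by fun_prop
  exact ((isOpen_setOf_mem_slopeCone _ _).preimage hcont).eventually_mem
    (momentPoint_mem_slopeCone σ hij)

theorem interior_convexHull_range_nonempty {ι V : Type*} [Fintype ι] [NormedAddCommGroup V]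
    [NormedSpace ℝ V] [FiniteDimensional ℝ V] {w : ι → V} (hw : AffineIndependent ℝ w)
    (hcard : Fintype.card ι = Module.finrank ℝ V + 1) :
    (interior (convexHull ℝ (range w))).Nonempty := by
  rwa [interior_convexHull_nonempty_iff_affineSpan_eq_top,
    hw.affineSpan_eq_top_iff_card_eq_finrank_add_one]

theorem HRConvex.exists_eventually_rayPoint_zero_notMem {C : Set (Fin 4 → ℝ)} (hC : HRConvex C)
    (h0 : 0 ∉ C) :
    ∃ σ : ℝ, ∀ j : Fin 4, ∀ᶠ u in 𝓝 (momentPoint σ j), rayPoint u 0 ∉ C := by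
  have hcont : Continuous fun u : Fin 3 → ℝ ↦ u 0 := by fun_prop
  simp only [rayPoint_zero]
  rcases hC.forall_lineMap_notMem_of_notMem (q := ![1, 0, 0, 0]) h0
    (by simp [HorizontallyLinked]) with hray | hray
  · refine ⟨33, fun j ↦ ?_⟩
    have hpos : 0 < momentPoint 33 j 0 := by fin_cases j <;> norm_num [momentPoint]
    exact (hcont.continuousAt.eventually_const_lt hpos).mono fun u hu ↦ hray _ hu.le
  · refine ⟨0, fun j ↦ ?_⟩
    have hneg : momentPoint 0 j 0 < 0 := by simp [momentPoint]
    exact (hcont.continuousAt.eventually_lt_const hneg).mono fun u hu ↦ hray _ hu.le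

namespace PreciselyMonotone

variable {E : Set (Fin 4 → ℝ)}

theorem interior_exitSet_nonempty (hE : PreciselyMonotone E) (hint : interior E = ∅) {σ : ℝ}
    (hσ : ∀ j : Fin 4, ∀ᶠ u in 𝓝 (momentPoint σ j), rayPoint u 0 ∈ E) :
    (interior (exitSet E (2 ^ 4))).Nonempty := by
  have hclosure : (fun j : Fin 4 ↦ momentPoint σ j) ∈
      closure (univ.pi fun _ : Fin 4 ↦ exitSet E (2 ^ 0)) :=
    mem_closure_pi.2 fun j _ ↦ hE.1.mem_closure_exitSet hint (hσ j) (by norm_num)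
  obtain ⟨w, hw, hind, hslope⟩ := ((mem_closure_iff_frequently.1 hclosure).and_eventually
    (eventually_nhds_momentPoint σ)).exists
  have hhull : convexHull ℝ (range w) ⊆ exitSet E (2 ^ 4) :=
    hE.convexHull_range_subset_exitSet (pow_right_mono₀ one_le_two) (by norm_num) w
      (fun i ↦ hw i (mem_univ i)) hslope
  exact (interior_convexHull_range_nonempty hind (by simp)).mono (interior_mono hhull)

theorem interior_nonempty_or_of_zero_mem (hE : PreciselyMonotone E) (h0 : 0 ∈ E) :
    (interior E).Nonempty ∨ (interior Eᶜ).Nonempty := by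
  rcases (interior E).eq_empty_or_nonempty with hint | hint
  · obtain ⟨σ, hσ⟩ := hE.2.exists_eventually_rayPoint_zero_notMem (notMem_compl_iff.2 h0)
    simp only [notMem_compl_iff] at hσ
    exact .inr (hE.1.interior_compl_nonempty_of_interior_exitSet_nonempty (by norm_num)
      (hE.interior_exitSet_nonempty hint hσ))
  · exact .inl hint

theorem interior_nonempty_or_interior_compl_nonempty (hE : PreciselyMonotone E) :
    (interior E).Nonempty ∨ (interior Eᶜ).Nonempty := by
  by_cases h0 : 0 ∈ E
  · exact hE.interior_nonempty_or_of_zero_mem h0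
  · simpa [or_comm] using hE.compl.interior_nonempty_or_of_zero_mem h0

theorem frontier_eq_of_height_zero_subset (hE : PreciselyMonotone E)
    (h0 : {w : Fin 4 → ℝ | w 3 = 0} ⊆ frontier E) : frontier E = {w : Fin 4 → ℝ | w 3 = 0} := by
  refine Subset.antisymm ?_ h0
  rcases hE.interior_nonempty_or_interior_compl_nonempty with hint | hint
  · exact hE.frontier_subset_of_interior_nonempty h0 hint
  · rw [← frontier_compl] at h0 ⊢
    exact hE.compl.frontier_subset_of_interior_nonempty h0 hint

end PreciselyMonotone

/-! ### Left translations -/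

/-- Left translation by `p` in the group `ℍ×ℝ`, as a homeomorphism. The inverse of `p` in the
group is its Euclidean opposite. -/
def leftTranslation (p : Fin 4 → ℝ) : (Fin 4 → ℝ) ≃ₜ (Fin 4 → ℝ) where
  toFun := hmul p
  invFun := hmul (-p)
  left_inv q := by
    ext i
    fin_cases i <;> simp [hmul]
    ring
  right_inv q := by
    ext i
    fin_cases i <;> simp [hmul]
    ring
  continuous_toFun := by unfold hmul; fun_prop
  continuous_invFun := by unfold hmul; fun_prop

theorem hmul_assoc (p q r : Fin 4 → ℝ) : hmul (hmul p q) r = hmul p (hmul q r) := by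
  ext i
  fin_cases i <;> simp [hmul] <;> ring

theorem HRConvex.preimage_leftTranslation {C : Set (Fin 4 → ℝ)} (hC : HRConvex C)
    (p : Fin 4 → ℝ) : HRConvex (leftTranslation p ⁻¹' C) := by
  intro q hq a b c hqv s hs0 hs1
  have hqv' : hmul p (hmul q ![a, b, c, 0]) ∈ C := hqv
  rw [← hmul_assoc] at hqv'
  change hmul p (hmul q _) ∈ C
  rw [← hmul_assoc]
  exact hC _ hq a b c hqv' s hs0 hs1

theorem image_leftTranslation_height_zero (p : Fin 4 → ℝ) :
    leftTranslation p '' {w | w 3 = 0} = {q | ∃ a b c : ℝ, q = hmul p ![a, b, c, 0]} := by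
  ext q
  constructor
  · rintro ⟨w, hw, rfl⟩
    refine ⟨w 0, w 1, w 2, congrArg (hmul p) ?_⟩
    ext i
    fin_cases i <;> simp_all
  · rintro ⟨a, b, c, rfl⟩
    exact ⟨_, rfl, rfl⟩

/-- If the horizontal plane `H_P = {P·(a,b,c,0)}` at a point `P` is contained in the
boundary of a precisely monotone set `E ⊆ ℍ×ℝ`, then `∂E = H_P`. -/
theorem monotone_boundary_horizontal_plane
    (E : Set (Fin 4 → ℝ)) (hE : PreciselyMonotone E) (P : Fin 4 → ℝ)
    (hH : {q : Fin 4 → ℝ | ∃ a b c : ℝ, q = hmul P ![a, b, c, 0]} ⊆ frontier E) :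
    frontier E = {q : Fin 4 → ℝ | ∃ a b c : ℝ, q = hmul P ![a, b, c, 0]} := by
  have hE' : PreciselyMonotone (leftTranslation P ⁻¹' E) :=
    ⟨hE.1.preimage_leftTranslation P, hE.2.preimage_leftTranslation P⟩
  have hfrontier : leftTranslation P ⁻¹' frontier E = frontier (leftTranslation P ⁻¹' E) :=
    (leftTranslation P).preimage_frontier E
  rw [← image_leftTranslation_height_zero] at hH ⊢
  rw [← hE'.frontier_eq_of_height_zero_subset (hfrontier ▸ image_subset_iff.1 hH), ← hfrontier,
    image_preimage_eq _ (leftTranslation P).surjective]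
end
end

section
/- Let E ⊆ ℝ⁴ = ℍ×ℝ be precisely monotone with E ≠ ∅ and E ≠ ℝ⁴, and suppose the origin (0,0,0,0) ∈ ∂E. Then at least one of the following holds: (i) ∂E = {(x,y,u,0) : (x,y,u) ∈ ℝ³}; (ii) the point (0,0,1,0) belongs to Int(E) ∪ Int(ℝ⁴∖E); (iii) there exists (a,b) ≠ (0,0) in ℝ² such that the point (a,b,0,0) belongs to Int(E) ∪ Int(ℝ⁴∖E). -/
/- The group `ℍ×ℝ`: `ℝ⁴` with coordinates `(x,y,u,t)` and law
`(x,y,u,t)·(x',y',u',t') = (x+x', y+y', u+u', t+t'+2(yx'−y'x))`. -/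

noncomputable section

/-!
A horizontal line whose direction is not in the radical of the form, and which contains two boundary
points of a monotone set, lies in the boundary: from an interior point of `E` on the line one passes
a boundary point into the interior of the complement, by joining nearby points with two-step
horizontal paths. If (ii) and (iii) fail, such lines through `(0,0,1,0)` sweep out a dense part of
the hyperplane `t = 0`, which therefore lies in `∂E`. If `∂E` contains a further point, then lines
crossing `t = 0` propagate the boundary to a dense set, so `∂E = ℝ⁴`.

This is impossible. A nonempty monotone set in `ℍ` contains a horizontal ray and, through each point
of that ray, half of the horizontal line in any given direction; horizontal segments between these
rays fill an open set. So each slice `u = c` of `E` or of its complement has interior in `ℍ`. There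
are uncountably many slices but only countably many basic open sets, so two slices of `E`, or two of
its complement, contain the same one; by convexity in `u` the set has interior in `ℝ⁴`.
-/

open Set Filter Topology

section HorizontalLines

variable {V : Type*} [NormedAddCommGroup V] [NormedSpace ℝ V] (ω : V →L[ℝ] V →L[ℝ] ℝ)

/-- The horizontal line through `p` with direction `v` in the Heisenberg-type group `V × ℝ` with
law `(v, t) · (v', t') = (v + v', t + t' + ω v v')`, parametrized as `s ↦ p · (s • v, 0)`. -/
def horizontalLine (p : V × ℝ) (v : V) (s : ℝ) : V × ℝ :=
  (p.1 + s • v, p.2 + s * ω p.1 v)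

/-- For alternating `ω`, the points `p` and `q` lie on a common horizontal line. -/
def Horizontal (p q : V × ℝ) : Prop :=
  q.2 = p.2 + ω p.1 q.1

/-- Horizontal convexity in `V × ℝ`: every horizontal line meets `C` in an interval. -/
def HorizontallyConvex (C : Set (V × ℝ)) : Prop :=
  ∀ p v, (horizontalLine ω p v ⁻¹' C).OrdConnected

/-- Precise monotonicity in `V × ℝ`. -/
def HorizontallyMonotone (C : Set (V × ℝ)) : Prop :=
  HorizontallyConvex ω C ∧ HorizontallyConvex ω Cᶜ

variable {ω} {C : Set (V × ℝ)} {p q : V × ℝ}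

lemma HorizontallyMonotone.compl (hC : HorizontallyMonotone ω C) : HorizontallyMonotone ω Cᶜ :=
  ⟨hC.2, by rw [compl_compl]; exact hC.1⟩

@[simp]
lemma horizontalLine_zero (p : V × ℝ) (v : V) : horizontalLine ω p v 0 = p := by
  simp [horizontalLine]

lemma horizontalLine_neg (p : V × ℝ) (v : V) (s : ℝ) :
    horizontalLine ω p (-v) s = horizontalLine ω p v (-s) := by
  simp [horizontalLine]

lemma HorizontallyConvex.preimage {W : Type*} [NormedAddCommGroup W] [NormedSpace ℝ W]
    {η : W →L[ℝ] W →L[ℝ] ℝ} (hC : HorizontallyConvex ω C) {f : W × ℝ → V × ℝ}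
    (hf : ∀ p w, ∃ q v, ∀ s, f (horizontalLine η p w s) = horizontalLine ω q v s) :
    HorizontallyConvex η (f ⁻¹' C) := by
  intro p w
  obtain ⟨q, v, hqv⟩ := hf p w
  simpa only [preimage_preimage, hqv] using hC q v

lemma HorizontallyMonotone.preimage {W : Type*} [NormedAddCommGroup W] [NormedSpace ℝ W]
    {η : W →L[ℝ] W →L[ℝ] ℝ} (hC : HorizontallyMonotone ω C) {f : W × ℝ → V × ℝ}
    (hf : ∀ p w, ∃ q v, ∀ s, f (horizontalLine η p w s) = horizontalLine ω q v s) :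
    HorizontallyMonotone η (f ⁻¹' C) :=
  ⟨hC.1.preimage hf, hC.2.preimage hf⟩

lemma HorizontallyMonotone.mapsTo_Ici_or_mapsTo_neg (hC : HorizontallyMonotone ω C) (hp : p ∈ C)
    (v : V) : MapsTo (horizontalLine ω p v) (Ici 0) C ∨
      MapsTo (horizontalLine ω p (-v)) (Ici 0) C := by
  by_contra! hcon
  simp only [MapsTo, mem_Ici, horizontalLine_neg, not_forall] at hcon
  obtain ⟨⟨a, ha, haC⟩, b, hb, hbC⟩ := hcon
  exact (hC.2 p v).out hbC haC (show (0 : ℝ) ∈ Icc (-b) a from ⟨by linarith, ha⟩)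
    (by simpa using hp)

section Alternating

variable (hω : ∀ v, ω v v = 0)
include hω

lemma alternating_swap (v w : V) : ω w v = -ω v w := by
  have h := hω (v + w)
  simp only [map_add, add_apply, hω] at h
  linarith

lemma horizontalLine_horizontalLine_smul (p : V × ℝ) (v : V) (a c s : ℝ) :
    horizontalLine ω (horizontalLine ω p v a) (c • v) s = horizontalLine ω p v (a + c * s) := by
  simp only [horizontalLine, map_add, map_smul, add_apply, smul_apply,
    hω, smul_eq_mul, Prod.mk.injEq]
  exact ⟨by module, by ring⟩

lemma horizontalLine_horizontalLine_sub (p : V × ℝ) (v : V) (a b s : ℝ) :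
    horizontalLine ω (horizontalLine ω p v a)
      ((horizontalLine ω p v b).1 - (horizontalLine ω p v a).1) s =
      horizontalLine ω p v (a + (b - a) * s) := by
  rw [← horizontalLine_horizontalLine_smul hω]
  congr 1
  simp only [horizontalLine]
  module

lemma Horizontal.symm (h : Horizontal ω p q) : Horizontal ω q p := by
  rw [Horizontal] at h ⊢
  rw [alternating_swap hω p.1, h]
  ring

lemma Horizontal.horizontalLine_sub_one (h : Horizontal ω p q) :
    horizontalLine ω p (q.1 - p.1) 1 = q := by
  rw [Horizontal] at h
  ext <;> simp [horizontalLine, hω, h]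

lemma HorizontallyConvex.mem_of_horizontal (hC : HorizontallyConvex ω C) (hp : p ∈ C) (hq : q ∈ C)
    (h : Horizontal ω p q) {s : ℝ} (hs : s ∈ Icc (0 : ℝ) 1) :
    horizontalLine ω p (q.1 - p.1) s ∈ C :=
  (hC p (q.1 - p.1)).out (by simpa using hp)
    (by rwa [mem_preimage, h.horizontalLine_sub_one hω]) hs

end Alternating

end HorizontalLines

section Connector

variable {V : Type*} [NormedAddCommGroup V] [NormedSpace ℝ V] (ω : V →L[ℝ] V →L[ℝ] ℝ)

/-- A point horizontally joined to both `q` and `x`. It lies over the midpoint of `q.1` and `x.1`,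
displaced along `w` so as to absorb the failure of `q` and `x` to be horizontally joined; this
needs `ω w (x.1 - q.1) ≠ 0`. -/
def connector (w : V) (q x : V × ℝ) : V × ℝ :=
  let m := (1 / 2 : ℝ) • (q.1 + x.1) + ((x.2 - q.2 - ω q.1 x.1) / ω w (x.1 - q.1)) • w
  (m, q.2 + ω q.1 m)

variable {ω} {C : Set (V × ℝ)} {p q x : V × ℝ} {v w : V} {a b c : ℝ}

lemma horizontal_connector (w : V) (q x : V × ℝ) : Horizontal ω q (connector ω w q x) :=
  rfl

lemma continuousAt_connector (h : ω w (x.1 - q.1) ≠ 0) :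
    ContinuousAt (fun z : (V × ℝ) × (V × ℝ) ↦ connector ω w z.1 z.2) (q, x) := by
  unfold connector
  fun_prop (disch := exact h)

section Alternating

variable (hω : ∀ v, ω v v = 0)
include hω

lemma connector_horizontal (h : ω w (x.1 - q.1) ≠ 0) : Horizontal ω (connector ω w q x) x := by
  rw [map_sub] at h
  simp only [Horizontal, connector, map_add, map_sub, map_smul, add_apply, smul_apply, smul_eq_mul,
    hω, alternating_swap hω w q.1]
  field_simp
  ring

lemma connector_horizontalLine (w : V) (p : V × ℝ) (v : V) (b c : ℝ) :
    connector ω w (horizontalLine ω p v b) (horizontalLine ω p v c) =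
      horizontalLine ω p v ((b + c) / 2) := by
  have hdefect : (horizontalLine ω p v c).2 - (horizontalLine ω p v b).2 -
      ω (horizontalLine ω p v b).1 (horizontalLine ω p v c).1 = 0 := by
    simp only [horizontalLine, map_add, map_smul, add_apply, smul_apply, smul_eq_mul, hω,
      alternating_swap hω p.1 v]
    ring
  simp only [connector, hdefect, zero_div, zero_smul, add_zero]
  simp only [horizontalLine, map_add, map_smul, add_apply, smul_apply, smul_eq_mul, hω,
    alternating_swap hω p.1 v, Prod.mk.injEq]
  exact ⟨by module, by ring⟩

-- A point `x'` near `x` is reached from a point `q' ∉ C` near `q` by two horizontal segments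
-- through a connector. Both segments, extended backwards, start near `horizontalLine ω q v (-μ)`
-- and hence in `C`; so the connector lies outside `C` because `q'` does, and then so does `x'`.
lemma HorizontallyConvex.eventually_notMem (hC : HorizontallyConvex ω C) (hv : ω w v ≠ 0)
    {μ : ℝ} (hμ : 0 < μ) (hq : horizontalLine ω q v (-μ) ∈ interior C) :
    ∀ᶠ z in 𝓝 (q, horizontalLine ω q v 1), z.1 ∉ C → z.2 ∉ C := by
  set x := horizontalLine ω q v 1 with hx
  have hqx : ω w (x.1 - q.1) ≠ 0 := by simpa [hx, horizontalLine] using hv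
  have hcont := continuousAt_connector hqx
  have hmid : connector ω w q x = horizontalLine ω q v (1 / 2) := by
    simpa using connector_horizontalLine hω w q v 0 1
  have hq_back : ∀ᶠ y in 𝓝 (q, x),
      horizontalLine ω y.1 ((connector ω w y.1 y.2).1 - y.1.1) (-(2 * μ)) ∈ C := by
    refine ContinuousAt.eventually_mem (by unfold horizontalLine; fun_prop) ?_
    have hline := horizontalLine_horizontalLine_sub hω q v 0 (1 / 2) (-(2 * μ))
    rw [horizontalLine_zero] at hline
    have hpar : 0 + (1 / 2 - 0) * -(2 * μ) = -μ := by ring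
    rwa [hmid, hline, hpar, ← mem_interior_iff_mem_nhds]
  have hx_back : ∀ᶠ y in 𝓝 (q, x),
      horizontalLine ω y.2 ((connector ω w y.1 y.2).1 - y.2.1) (2 * μ + 2) ∈ C := by
    refine ContinuousAt.eventually_mem (by unfold horizontalLine; fun_prop) ?_
    have hpar : 1 + (1 / 2 - 1) * (2 * μ + 2) = -μ := by ring
    rwa [hmid, hx, horizontalLine_horizontalLine_sub hω, hpar, ← mem_interior_iff_mem_nhds]
  have hne : ∀ᶠ y in 𝓝 (q, x), ω w (y.2.1 - y.1.1) ≠ 0 :=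
    ContinuousAt.eventually_ne (by fun_prop) hqx
  filter_upwards [hq_back, hx_back, hne] with ⟨q', x'⟩ hq' hx' hne' hq'C hx'C
  have hzC : connector ω w q' x' ∈ C := by
    have := (hC x' _).out (by simpa using hx'C) hx' (show (1 : ℝ) ∈ Icc 0 (2 * μ + 2) from
      ⟨zero_le_one, by linarith⟩)
    rwa [mem_preimage, ((connector_horizontal hω hne').symm hω).horizontalLine_sub_one hω] at this
  refine hq'C ?_
  simpa using (hC q' _).out hq'
    (by rwa [mem_preimage, (horizontal_connector w q' x').horizontalLine_sub_one hω])
    (show (0 : ℝ) ∈ Icc (-(2 * μ)) 1 from ⟨by linarith, zero_le_one⟩)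

lemma HorizontallyConvex.mem_interior_compl (hC : HorizontallyConvex ω C)
    (hv : ω v ≠ 0) (ha : horizontalLine ω p v a ∈ interior C)
    (hb : horizontalLine ω p v b ∉ interior C) (hbc : 0 < (b - a) * (c - b)) :
    horizontalLine ω p v c ∈ interior Cᶜ := by
  have hcb : c - b ≠ 0 := by rintro h; simp [h] at hbc
  have hratio : 0 < (b - a) / (c - b) := by
    rw [← mul_div_mul_right _ _ hcb]
    exact div_pos hbc (mul_self_pos.2 hcb)
  obtain ⟨w, hw⟩ : ∃ w, ω v w ≠ 0 := by simpa [ContinuousLinearMap.ext_iff] using hv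
  have hwv : ω w ((c - b) • v) ≠ 0 := by simp [alternating_swap hω v w, hw, hcb]
  have hline := horizontalLine_horizontalLine_smul hω p v b (c - b)
  have hpar : b + (c - b) * -((b - a) / (c - b)) = a := by field_simp; ring
  have hnear := hC.eventually_notMem hω hwv hratio (by rwa [hline, hpar])
  rw [hline, mul_one, add_sub_cancel, nhds_prod_eq] at hnear
  have hb_freq : ∃ᶠ q in 𝓝 (horizontalLine ω p v b), q ∉ C := by
    simpa [mem_interior_iff_mem_nhds, Filter.Frequently, Filter.Eventually] using hb
  obtain ⟨q, hq, hqx⟩ := (hb_freq.and_eventually hnear.curry).exists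
  rw [mem_interior_iff_mem_nhds]
  filter_upwards [hqx] with x hx using hx hq

end Alternating

end Connector

section Frontier

lemma mem_frontier_iff_notMem_interior_and_compl {X : Type*} [TopologicalSpace X] {s : Set X}
    {x : X} :
    x ∈ frontier s ↔ x ∉ interior s ∧ x ∉ interior sᶜ := by
  rw [← not_or, ← mem_union, ← compl_frontier_eq_union_interior, notMem_compl_iff]

variable {V : Type*} [NormedAddCommGroup V] [NormedSpace ℝ V] {ω : V →L[ℝ] V →L[ℝ] ℝ}
  {C : Set (V × ℝ)} {p q z : V × ℝ} {v : V} (hω : ∀ v, ω v v = 0)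
include hω

lemma HorizontallyMonotone.horizontalLine_notMem_interior (hC : HorizontallyMonotone ω C)
    (hv : ω v ≠ 0) (hp : p ∈ frontier C) (hq : horizontalLine ω p v 1 ∈ frontier C) (s : ℝ) :
    horizontalLine ω p v s ∉ interior C := by
  intro hs
  rw [mem_frontier_iff_notMem_interior_and_compl] at hp hq
  rw [← horizontalLine_zero (ω := ω) p v] at hp
  have hs0 : s ≠ 0 := by rintro rfl; exact hp.1 hs
  have hs1 : s ≠ 1 := by rintro rfl; exact hq.1 hs
  rcases hs0.lt_or_gt with hneg | hpos
  · exact hq.2 (hC.1.mem_interior_compl hω hv hs hp.1 (by linarith))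
  rcases hs1.lt_or_gt with hlt | hgt
  · have hleft := hC.1.mem_interior_compl (c := -1) hω hv hs hp.1 (by linarith)
    have hright := hC.1.mem_interior_compl (c := 2) hω hv hs hq.1 (by linarith)
    have hsC : horizontalLine ω p v s ∈ C := interior_subset hs
    exact (hC.2 p v).out (mem_preimage.2 (interior_subset hleft))
      (mem_preimage.2 (interior_subset hright)) ⟨by linarith, by linarith⟩ hsC
  · exact hp.2 (hC.1.mem_interior_compl hω hv hs hq.1 (by linarith))

lemma HorizontallyMonotone.horizontalLine_mem_frontier (hC : HorizontallyMonotone ω C)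
    (hv : ω v ≠ 0) (hp : p ∈ frontier C) {a : ℝ} (ha : a ≠ 0)
    (hq : horizontalLine ω p v a ∈ frontier C) (s : ℝ) :
    horizontalLine ω p v s ∈ frontier C := by
  have hline : ∀ t, horizontalLine ω p (a • v) t = horizontalLine ω p v (a * t) := fun t ↦ by
    simpa using horizontalLine_horizontalLine_smul hω p v 0 a t
  have hav : ω (a • v) ≠ 0 := by simpa [ha] using hv
  have hs : horizontalLine ω p v s = horizontalLine ω p (a • v) (s / a) := by
    rw [hline, mul_div_cancel₀ _ ha]
  rw [← mul_one a, ← hline] at hq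
  rw [hs, mem_frontier_iff_notMem_interior_and_compl]
  refine ⟨hC.horizontalLine_notMem_interior hω hav hp hq _,
    hC.compl.horizontalLine_notMem_interior hω hav ?_ ?_ _⟩ <;> rwa [frontier_compl]

-- The horizontal line through `q` and `z` crosses the hyperplane `t = 0` away from `q`.
lemma HorizontallyMonotone.mem_frontier_of_horizontal (hC : HorizontallyMonotone ω C)
    (hzero : ∀ v, (v, 0) ∈ frontier C) (hq : q ∈ frontier C) (hq0 : q.2 ≠ 0)
    (h : Horizontal ω q z) (hne : z.2 ≠ q.2) : z ∈ frontier C := by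
  have hslope : ω q.1 (z.1 - q.1) = z.2 - q.2 := by rw [map_sub, hω, h]; ring
  have hd : z.2 - q.2 ≠ 0 := sub_ne_zero.2 hne
  have hv : ω (z.1 - q.1) ≠ 0 := fun h0 ↦ hd <| by
    rw [← hslope, alternating_swap hω (z.1 - q.1), h0, zero_apply, neg_zero]
  have hcross : horizontalLine ω q (z.1 - q.1) (-q.2 / (z.2 - q.2)) ∈ frontier C := by
    convert hzero (q.1 + (-q.2 / (z.2 - q.2)) • (z.1 - q.1)) using 1
    rw [horizontalLine, hslope, div_mul_cancel₀ _ hd, add_neg_cancel]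
  rw [← h.horizontalLine_sub_one hω]
  exact hC.horizontalLine_mem_frontier hω hv hq (div_ne_zero (neg_ne_zero.2 hq0) hd) hcross 1

-- `q` and `z` are joined by two horizontal segments meeting at any prescribed height `r`; take `r`
-- different from `0`, `q.2` and `z.2`.
lemma HorizontallyMonotone.mem_frontier_of_apply_ne_zero (hC : HorizontallyMonotone ω C)
    (hzero : ∀ v, (v, 0) ∈ frontier C) (hq : q ∈ frontier C) (hq0 : q.2 ≠ 0)
    (hqz : ω q.1 z.1 ≠ 0) : z ∈ frontier C := by
  obtain ⟨r, hr⟩ := Infinite.exists_notMem_finset {0, q.2, z.2}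
  simp only [Finset.mem_insert, Finset.mem_singleton, not_or] at hr
  obtain ⟨hr0, hrq, hrz⟩ := hr
  let m : V × ℝ := ((ω q.1 z.1)⁻¹ • ((r - q.2) • z.1 - (r - z.2) • q.1), r)
  have hqm : Horizontal ω q m := by
    simp only [Horizontal, m, map_smul, map_sub, hω, smul_eq_mul]
    field_simp
    ring
  have hmz : Horizontal ω m z := by
    simp only [Horizontal, m, map_smul, map_sub, smul_apply, sub_apply, hω, smul_eq_mul]
    field_simp
    ring
  exact hC.mem_frontier_of_horizontal hω hzero
    (hC.mem_frontier_of_horizontal hω hzero hq hq0 hqm hrq) hr0 hmz (Ne.symm hrz)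

end Frontier

section FrontierHyperplane

variable {V : Type*} [NormedAddCommGroup V] [NormedSpace ℝ V] {ω : V →L[ℝ] V →L[ℝ] ℝ}

lemma dense_setOf_apply_ne_zero {F : Type*} [NormedAddCommGroup F] [NormedSpace ℝ F]
    {f : V →L[ℝ] F} (hf : f ≠ 0) : Dense {v | f v ≠ 0} := by
  have hinterior : interior (f.ker : Set V) = ∅ := by
    refine not_nonempty_iff_eq_empty.1 fun hne ↦ hf ?_
    have htop := f.ker.eq_top_of_nonempty_interior' hne
    ext v
    exact LinearMap.mem_ker.1 (htop ▸ Submodule.mem_top : v ∈ f.ker)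
  exact interior_eq_empty_iff_dense_compl.1 hinterior

variable (hω : ∀ v, ω v v = 0)
include hω

lemma isPreconnected_setOf_apply_ne_zero : IsPreconnected {v | ω v ≠ 0} := by
  rcases eq_or_ne ω 0 with rfl | hne
  · simpa using isPreconnected_empty
  obtain ⟨v, w, hvw⟩ : ∃ v w, ω v w ≠ 0 := by
    simpa [ContinuousLinearMap.ext_iff] using hne
  have hindep : LinearIndependent ℝ ![Submodule.Quotient.mk (p := ω.ker) v,
      Submodule.Quotient.mk w] := by
    refine LinearIndependent.pair_iff.2 fun a b hab ↦ ?_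
    rw [← Submodule.Quotient.mk_smul, ← Submodule.Quotient.mk_smul, ← Submodule.Quotient.mk_add,
      Submodule.Quotient.mk_eq_zero] at hab
    have hker : ω (a • v + b • w) = 0 := hab
    have hv := congr($hker v)
    have hw := congr($hker w)
    simp only [map_add, map_smul, add_apply, smul_apply, smul_eq_mul, hω, zero_apply,
      alternating_swap hω v w] at hv hw
    simpa [hvw] using And.intro hw hv
  have hcodim : 1 < Module.rank ℝ (V ⧸ ω.ker) := by
    have hrank : 2 ≤ Module.rank ℝ (V ⧸ ω.ker) := by simpa using hindep.cardinal_lift_le_rank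
    exact Cardinal.one_lt_two.trans_le hrank
  exact (isConnected_compl_of_one_lt_codim hcodim).isPreconnected

variable {C : Set (V × ℝ)} {q : V × ℝ}

-- If `q.1` is in the radical of `ω`, the points at height `q.2` over the complement of the radical
-- form a connected set containing points opposite with respect to `q`.
lemma HorizontallyMonotone.exists_apply_ne_zero_mem_frontier (hC : HorizontallyMonotone ω C)
    (hω0 : ω ≠ 0) (hq : q ∈ frontier C) : ∃ x, ω x ≠ 0 ∧ (x, q.2) ∈ frontier C := by
  by_cases hq1 : ω q.1 ≠ 0
  · exact ⟨q.1, hq1, hq⟩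
  rw [not_not] at hq1
  by_contra! hcon
  obtain ⟨v, hv⟩ : ∃ v, ω v ≠ 0 := by simpa [ContinuousLinearMap.ext_iff] using hω0
  have hline : ∀ s, horizontalLine ω q v s = (q.1 + s • v, q.2) := fun s ↦ by
    simp [horizontalLine, hq1]
  have hconn := (isPreconnected_setOf_apply_ne_zero hω).image (fun x ↦ (x, q.2)) (by fun_prop)
  have hmem : ∀ s : ℝ, s ≠ 0 →
      horizontalLine ω q v s ∈ (fun x ↦ (x, q.2)) '' {x | ω x ≠ 0} := fun s hs ↦
    ⟨q.1 + s • v, by simp [hq1, hs, hv], (hline s).symm⟩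
  have hsub : (fun x ↦ (x, q.2)) '' {x | ω x ≠ 0} ⊆ interior C ∪ interior Cᶜ := by
    rw [← compl_frontier_eq_union_interior]
    exact image_subset_iff.2 hcon
  have hdisj : Disjoint (interior C) (interior Cᶜ) :=
    disjoint_compl_right.mono interior_subset interior_subset
  rw [mem_frontier_iff_notMem_interior_and_compl, ← horizontalLine_zero (ω := ω) q v] at hq
  rcases hconn.subset_or_subset isOpen_interior isOpen_interior hdisj hsub with hin | hin
  · exact hdisj.le_bot ⟨hin (hmem (-1) (by norm_num)),
      hC.1.mem_interior_compl hω hv (hin (hmem 1 one_ne_zero)) hq.1 (by norm_num)⟩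
  · have := hC.2.mem_interior_compl hω hv (hin (hmem 1 one_ne_zero)) hq.2 (c := -1) (by norm_num)
    rw [compl_compl] at this
    exact hdisj.le_bot ⟨this, hin (hmem (-1) (by norm_num))⟩

lemma HorizontallyMonotone.frontier_eq_or_eq_univ (hC : HorizontallyMonotone ω C) (hω0 : ω ≠ 0)
    (hzero : ∀ v, (v, 0) ∈ frontier C) : frontier C = {p | p.2 = 0} ∨ frontier C = univ := by
  refine or_iff_not_imp_left.2 fun hne ↦ ?_
  obtain ⟨q, hq, hq0⟩ : ∃ q ∈ frontier C, q.2 ≠ 0 := by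
    by_contra! hcon
    exact hne (Subset.antisymm hcon fun p hp ↦ by
      rw [← Prod.mk.eta (p := p), hp.out]; exact hzero p.1)
  obtain ⟨x, hx, hxq⟩ := hC.exists_apply_ne_zero_mem_frontier hω hω0 hq
  have hdense : Dense {z : V × ℝ | ω x z.1 ≠ 0} :=
    (dense_setOf_apply_ne_zero hx).preimage isOpenMap_fst
  rw [← isClosed_frontier.closure_eq]
  exact (hdense.mono fun z hz ↦ hC.mem_frontier_of_apply_ne_zero hω hzero hxq hq0 hz).closure_eq

end FrontierHyperplane

section TrivialExtension

variable {V : Type*} [NormedAddCommGroup V] [NormedSpace ℝ V]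

/-- The form on `V × ℝ` that ignores the second factor. The group it defines on `(V × ℝ) × ℝ` is the
direct product of the group defined by `ω` on `V × ℝ` with an additional line. -/
def trivialExtension (ω : V →L[ℝ] V →L[ℝ] ℝ) : (V × ℝ) →L[ℝ] (V × ℝ) →L[ℝ] ℝ :=
  ω.bilinearComp (.fst ℝ V ℝ) (.fst ℝ V ℝ)

variable {ω : V →L[ℝ] V →L[ℝ] ℝ} {C : Set ((V × ℝ) × ℝ)}

@[simp]
lemma trivialExtension_apply (v w : V × ℝ) : trivialExtension ω v w = ω v.1 w.1 :=
  rfl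

lemma trivialExtension_ne_zero (hω0 : ω ≠ 0) : trivialExtension ω ≠ 0 := fun h ↦
  hω0 <| by ext v w; simpa using congr($h (v, 0) (w, 0))

-- The line through `((0, 1), 0)` and `((v, c), 0)` meets the hyperplane `u = 0`.
lemma HorizontallyMonotone.mem_frontier_of_fst (hω : ∀ v, ω v v = 0) (hω0 : ω ≠ 0)
    (hC : HorizontallyMonotone (trivialExtension ω) C) (hunit : ((0, 1), 0) ∈ frontier C)
    (hfst : ∀ v, ((v, 0), 0) ∈ frontier C) (z : V × ℝ) : (z, 0) ∈ frontier C := by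
  have hgeneric : {v | ω v ≠ 0} ×ˢ {1}ᶜ ⊆ {z : V × ℝ | (z, 0) ∈ frontier C} := by
    rintro ⟨v, c⟩ ⟨hv, hc⟩
    have hc' : c - 1 ≠ 0 := sub_ne_zero.2 hc
    have hdir : trivialExtension ω (v, c - 1) ≠ 0 := fun h ↦ hv <| by
      ext w; simpa using congr($h (w, 0))
    have hline : ∀ s, horizontalLine (trivialExtension ω) ((0, 1), 0) (v, c - 1) s =
        ((s • v, 1 + s * (c - 1)), 0) := fun s ↦ by simp [horizontalLine]
    have hcross : horizontalLine (trivialExtension ω) ((0, 1), 0) (v, c - 1) (-(c - 1)⁻¹) ∈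
        frontier C := by
      rw [hline, neg_mul, inv_mul_cancel₀ hc', add_neg_cancel]
      exact hfst _
    have hpoint := hC.horizontalLine_mem_frontier (fun v ↦ hω v.1) hdir hunit
      (neg_ne_zero.2 (inv_ne_zero hc')) hcross 1
    simpa [hline] using hpoint
  have hdense :=
    ((dense_setOf_apply_ne_zero hω0).prod (dense_compl_singleton (1 : ℝ))).mono hgeneric
  have hclosed : IsClosed {z : V × ℝ | (z, 0) ∈ frontier C} :=
    isClosed_frontier.preimage (by fun_prop)
  have hz := hdense z
  rwa [hclosed.closure_eq] at hz

end TrivialExtension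

section Heisenberg

/-- The form `((x, y), (x', y')) ↦ 2 (y x' - x y')` defining the Heisenberg group `ℍ`. -/
def heisenbergForm : (ℝ × ℝ) →L[ℝ] (ℝ × ℝ) →L[ℝ] ℝ :=
  (2 : ℝ) • ((ContinuousLinearMap.snd ℝ ℝ ℝ).smulRight (ContinuousLinearMap.fst ℝ ℝ ℝ) -
    (ContinuousLinearMap.fst ℝ ℝ ℝ).smulRight (ContinuousLinearMap.snd ℝ ℝ ℝ))

lemma heisenbergForm_apply (v w : ℝ × ℝ) :
    heisenbergForm v w = 2 * (v.2 * w.1 - v.1 * w.2) := by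
  simp [heisenbergForm]

lemma heisenbergForm_self (v : ℝ × ℝ) : heisenbergForm v v = 0 := by
  rw [heisenbergForm_apply]
  ring

lemma heisenbergForm_ne_zero : heisenbergForm ≠ 0 := fun h ↦ by
  have := congr($h (0, 1) (1, 0))
  norm_num [heisenbergForm_apply] at this

lemma heisenbergForm_div_smul_add_div_smul {e₁ e₂ : ℝ × ℝ} (he : heisenbergForm e₁ e₂ ≠ 0)
    (v : ℝ × ℝ) : (heisenbergForm v e₂ / heisenbergForm e₁ e₂) • e₁ +
      (heisenbergForm e₁ v / heisenbergForm e₁ e₂) • e₂ = v := by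
  have hcramer : heisenbergForm v e₂ • e₁ + heisenbergForm e₁ v • e₂ =
      heisenbergForm e₁ e₂ • v := by
    ext <;> simp [heisenbergForm_apply] <;> ring
  rw [div_eq_inv_mul, div_eq_inv_mul, mul_smul, mul_smul, ← smul_add, hcramer,
    inv_smul_smul₀ he]

/-- The affine automorphism of `ℍ` that sends the origin to `p` and the directions `(1, 0)` and
`(0, 1)` to `e₁` and `e₂`: a linear automorphism followed by the left translation by `p`. -/
def heisenbergFrame (p : (ℝ × ℝ) × ℝ) (e₁ e₂ : ℝ × ℝ) (he : heisenbergForm e₁ e₂ ≠ 0) :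
    (ℝ × ℝ) × ℝ ≃ₜ (ℝ × ℝ) × ℝ where
  toFun z := (p.1 + (z.1.1 • e₁ + z.1.2 • e₂),
    p.2 - heisenbergForm e₁ e₂ / 2 * z.2 + heisenbergForm p.1 (z.1.1 • e₁ + z.1.2 • e₂))
  invFun z := ((heisenbergForm (z.1 - p.1) e₂ / heisenbergForm e₁ e₂,
      heisenbergForm e₁ (z.1 - p.1) / heisenbergForm e₁ e₂),
    (p.2 - z.2 + heisenbergForm p.1 (z.1 - p.1)) / (heisenbergForm e₁ e₂ / 2))
  left_inv z := by
    ext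
    · simp [heisenbergForm_self, he]
    · simp [heisenbergForm_self, he]
    · simp only [add_sub_cancel_left]
      field_simp
      ring
  right_inv z := by
    simp only [heisenbergForm_div_smul_add_div_smul he]
    ext
    · simp
    · simp
    · field_simp
      ring
  continuous_toFun := by fun_prop
  continuous_invFun := by fun_prop

variable {C : Set ((ℝ × ℝ) × ℝ)} {p : (ℝ × ℝ) × ℝ} {e₁ e₂ : ℝ × ℝ}
  {he : heisenbergForm e₁ e₂ ≠ 0}

lemma heisenbergFrame_horizontalLine (z : (ℝ × ℝ) × ℝ) (w : ℝ × ℝ) (s : ℝ) :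
    heisenbergFrame p e₁ e₂ he (horizontalLine heisenbergForm z w s) =
      horizontalLine heisenbergForm (heisenbergFrame p e₁ e₂ he z) (w.1 • e₁ + w.2 • e₂) s := by
  ext <;> simp [heisenbergFrame, horizontalLine, heisenbergForm_apply] <;> ring

lemma heisenbergFrame_axis (s : ℝ) :
    heisenbergFrame p e₁ e₂ he ((s, 0), 0) = horizontalLine heisenbergForm p e₁ s := by
  simp [heisenbergFrame, horizontalLine]

lemma HorizontallyConvex.preimage_heisenbergFrame (hC : HorizontallyConvex heisenbergForm C) :
    HorizontallyConvex heisenbergForm (heisenbergFrame p e₁ e₂ he ⁻¹' C) :=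
  hC.preimage fun z w ↦ ⟨_, _, heisenbergFrame_horizontalLine z w⟩

lemma interior_nonempty_of_preimage_heisenbergFrame
    (h : (interior (heisenbergFrame p e₁ e₂ he ⁻¹' C)).Nonempty) : (interior C).Nonempty := by
  rw [← Homeomorph.preimage_interior] at h
  exact nonempty_of_nonempty_preimage h

lemma exists_mem_Icc_one_sub_sub_sq_div_eq {x r : ℝ} (hx : x ∈ Ioo 0 1)
    (hr : r ∈ Icc (-x ^ 2) (1 - 2 * x)) : ∃ m ∈ Icc x 1, 1 - m - x ^ 2 / m = r := by
  obtain ⟨hx0, hx1⟩ := hx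
  have hcont : ContinuousOn (fun m : ℝ ↦ 1 - m - x ^ 2 / m) (Icc x 1) := by
    fun_prop (disch := intro m hm; exact (hx0.trans_le hm.1).ne')
  refine intermediate_value_Icc' hx1.le hcont ⟨?_, ?_⟩
  · simpa using hr.1
  · have : 1 - x - x ^ 2 / x = 1 - 2 * x := by field_simp; ring
    exact this ▸ hr.2

lemma HorizontallyConvex.mem_of_opposite_rays (hC : HorizontallyConvex heisenbergForm C)
    (hleft : MapsTo (horizontalLine heisenbergForm ((-1, 0), 0) (0, 1)) (Ici 0) C)
    (hright : MapsTo (horizontalLine heisenbergForm ((1, 0), 0) (0, -1)) (Ici 0) C)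
    {l σ : ℝ} (hl : l ∈ Icc (-1) 1) (hσ : 0 ≤ σ) : ((l, -(l * σ)), 2 * σ) ∈ C := by
  have hseg := hC.mem_of_horizontal heisenbergForm_self (hleft hσ) (hright hσ)
    (by simp [Horizontal, horizontalLine, heisenbergForm_apply])
    (s := (l + 1) / 2) ⟨by linarith [hl.1], by linarith [hl.2]⟩
  convert hseg using 1
  ext <;> simp [horizontalLine, heisenbergForm_apply] <;> ring

-- The segments joining the two lateral rays sweep out the surface `y = -x t / 2`, and the segments
-- joining points of that surface to points of the middle ray fill the open set `O`.
lemma HorizontallyConvex.interior_nonempty_of_rays (hC : HorizontallyConvex heisenbergForm C)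
    (hleft : MapsTo (horizontalLine heisenbergForm ((-1, 0), 0) (0, 1)) (Ici 0) C)
    (hright : MapsTo (horizontalLine heisenbergForm ((1, 0), 0) (0, -1)) (Ici 0) C)
    (hmid : MapsTo (horizontalLine heisenbergForm 0 (0, 1)) (Ici 0) C) :
    (interior C).Nonempty := by
  let O : Set ((ℝ × ℝ) × ℝ) := {p | 0 < p.1.1 ∧ p.1.1 < 1 ∧ 0 < p.2 ∧
    -p.1.1 ^ 2 * p.2 < 2 * p.1.1 * p.1.2 ∧ 2 * p.1.1 * p.1.2 < (1 - 2 * p.1.1) * p.2}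
  have hO : IsOpen O := by
    refine IsOpen.and ?_ <| IsOpen.and ?_ <| IsOpen.and ?_ <| IsOpen.and ?_ ?_ <;>
      exact isOpen_lt (by fun_prop) (by fun_prop)
  have hOC : O ⊆ C := by
    rintro ⟨⟨x, y⟩, t⟩ ⟨hx, hx1, ht, hy, hy'⟩
    dsimp only at hx hx1 ht hy hy'
    obtain ⟨m, ⟨hxm, hm1⟩, hm⟩ := exists_mem_Icc_one_sub_sub_sq_div_eq ⟨hx, hx1⟩
      (r := 2 * x * y / t) ⟨(le_div_iff₀ ht).2 hy.le, (div_le_iff₀ ht).2 hy'.le⟩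
    have hm0 : 0 < m := hx.trans_le hxm
    have hl : x / m ∈ Icc (-1) 1 :=
      ⟨by linarith [div_pos hx hm0], (div_le_one hm0).2 hxm⟩
    have hy_eq : y = t / (2 * x) * (1 - m - x ^ 2 / m) := by rw [hm]; field_simp
    have hray : ((0, t / (2 * x)), 0) ∈ C := by
      have hc : 0 ≤ t / (2 * x) := by positivity
      simpa [horizontalLine] using hmid hc
    have hseg := hC.mem_of_horizontal heisenbergForm_self hray
      (hC.mem_of_opposite_rays hleft hright hl (σ := t / (2 * x) * (x / m)) (by positivity))
      (by simp [Horizontal, heisenbergForm_apply]) (s := m) ⟨hm0.le, hm1⟩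
    convert hseg using 1
    ext <;> simp [horizontalLine, heisenbergForm_apply, hy_eq] <;> field_simp
    ring
  exact ⟨((1 / 2, -1 / 8), 1), mem_interior.2 ⟨O, hOC, hO, by norm_num [O]⟩⟩

lemma HorizontallyConvex.interior_nonempty_of_frame_rays (hC : HorizontallyConvex heisenbergForm C)
    (he : heisenbergForm e₁ e₂ ≠ 0)
    (hleft : MapsTo (horizontalLine heisenbergForm (horizontalLine heisenbergForm p e₁ (-1)) e₂)
      (Ici 0) C)
    (hright : MapsTo (horizontalLine heisenbergForm (horizontalLine heisenbergForm p e₁ 1) (-e₂))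
      (Ici 0) C)
    (hmid : MapsTo (horizontalLine heisenbergForm p e₂) (Ici 0) C) : (interior C).Nonempty := by
  have horigin : heisenbergFrame p e₁ e₂ he 0 = p := by simp [heisenbergFrame]
  refine interior_nonempty_of_preimage_heisenbergFrame (p := p) (he := he)
    (hC.preimage_heisenbergFrame.interior_nonempty_of_rays ?_ ?_ ?_)
  all_goals
    intro s hs
    rw [mem_preimage, heisenbergFrame_horizontalLine]
  · simpa [heisenbergFrame_axis] using hleft hs
  · simpa [heisenbergFrame_axis] using hright hs
  · simpa [horigin] using hmid hs

lemma HorizontallyMonotone.interior_nonempty_of_opposite_rays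
    (hC : HorizontallyMonotone heisenbergForm C) (he : heisenbergForm e₁ e₂ ≠ 0) (hp : p ∈ C)
    (hleft : MapsTo (horizontalLine heisenbergForm (horizontalLine heisenbergForm p e₁ (-1)) e₂)
      (Ici 0) C)
    (hright : MapsTo (horizontalLine heisenbergForm (horizontalLine heisenbergForm p e₁ 1) (-e₂))
      (Ici 0) C) : (interior C).Nonempty := by
  rcases hC.mapsTo_Ici_or_mapsTo_neg hp e₂ with hmid | hmid
  · exact hC.1.interior_nonempty_of_frame_rays he hleft hright hmid
  · refine hC.1.interior_nonempty_of_frame_rays (e₁ := -e₁) (by simpa using he) ?_ ?_ hmid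
    · simpa only [horizontalLine_neg p, neg_neg] using hright
    · simpa only [horizontalLine_neg p, neg_neg] using hleft

/-- The set swept out by the horizontal rays of direction `v` issuing from the points of the
horizontal ray from `p` with direction `e`. -/
def ruledSurface (p : (ℝ × ℝ) × ℝ) (e v : ℝ × ℝ) : Set ((ℝ × ℝ) × ℝ) :=
  image2 (fun s ↦ horizontalLine heisenbergForm (horizontalLine heisenbergForm p e s) v)
    (Ici 0) (Ici 0)

variable {e v : ℝ × ℝ} {d : ℝ}

-- Each point of the open set `O` lies on a horizontal segment joining the two surfaces at the
-- same height `y`.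
lemma HorizontallyConvex.interior_nonempty_of_two_ruledSurface
    (hC : HorizontallyConvex heisenbergForm C) (hd : 0 < d)
    (h₁ : ruledSurface 0 (1, 0) (0, 1) ⊆ C) (h₂ : ruledSurface 0 (1, 0) (d, 1) ⊆ C) :
    (interior C).Nonempty := by
  have hpoint : ∀ a s σ : ℝ, 0 ≤ s → 0 ≤ σ → ruledSurface 0 (1, 0) (a, 1) ⊆ C →
      ((s + σ * a, σ), -(2 * (σ * s))) ∈ C := fun a s σ hs hσ h ↦ by
    convert h (mem_image2_of_mem hs hσ) using 1
    ext <;> simp [horizontalLine, heisenbergForm_apply]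
    ring
  let O : Set ((ℝ × ℝ) × ℝ) := {p | 0 < p.1.2 ∧ 0 < p.2 + 2 * p.1.1 * p.1.2 ∧
    p.2 + 2 * p.1.1 * p.1.2 < 2 * d * p.1.2 ^ 2 ∧ d * p.1.2 < p.1.1}
  have hO : IsOpen O := by
    refine IsOpen.and ?_ <| IsOpen.and ?_ <| IsOpen.and ?_ ?_ <;>
      exact isOpen_lt (by fun_prop) (by fun_prop)
  have hOC : O ⊆ C := by
    rintro ⟨⟨x, y⟩, t⟩ ⟨hy, ht, ht', hx⟩
    dsimp only at hy ht ht' hx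
    obtain ⟨l, hl⟩ : ∃ l, l = (t + 2 * x * y) / (2 * d * y ^ 2) := ⟨_, rfl⟩
    have hl0 : 0 ≤ l := by rw [hl]; positivity
    have hl1 : l ≤ 1 := by rw [hl, div_le_one (by positivity)]; exact ht'.le
    have ht_eq : t = l * (2 * d * y ^ 2) - 2 * x * y := by rw [hl]; field_simp; ring
    have hdy : 0 < d * y := mul_pos hd hy
    have hldy : l * (d * y) ≤ d * y := mul_le_of_le_one_left hdy.le hl1
    have hq₁ := hpoint 0 (x - l * (d * y) / 2) y (by linarith) hy.le h₁
    have hq₂ := hpoint d (x - l * (d * y) / 2 - d * y / 2) y (by linarith) hy.le h₂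
    have hseg := hC.mem_of_horizontal heisenbergForm_self hq₁ hq₂
      (by simp only [Horizontal, heisenbergForm_apply]; ring) ⟨hl0, hl1⟩
    convert hseg using 1
    ext <;> simp [horizontalLine, heisenbergForm_apply, ht_eq] <;> ring
  refine ⟨((d + 1, 1), -2 - d), mem_interior.2 ⟨O, hOC, hO, ?_, ?_, ?_, ?_⟩⟩ <;> dsimp only <;>
    linarith

lemma HorizontallyConvex.interior_nonempty_of_ruledSurface_add
    (hC : HorizontallyConvex heisenbergForm C) (he : heisenbergForm e v ≠ 0) (hd : 0 < d)
    (h₁ : ruledSurface p e v ⊆ C) (h₂ : ruledSurface p e (v + d • e) ⊆ C) :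
    (interior C).Nonempty := by
  have horigin : heisenbergFrame p e v he 0 = p := by simp [heisenbergFrame]
  refine interior_nonempty_of_preimage_heisenbergFrame (p := p) (he := he)
    (hC.preimage_heisenbergFrame.interior_nonempty_of_two_ruledSurface hd ?_ ?_)
  all_goals
    refine image2_subset_iff.2 fun s hs σ hσ ↦ ?_
    simp only [mem_preimage, heisenbergFrame_horizontalLine, horigin, zero_smul, one_smul, zero_add,
      add_zero]
  · exact h₁ (mem_image2_of_mem hs hσ)
  · rw [add_comm]
    exact h₂ (mem_image2_of_mem hs hσ)

lemma HorizontallyMonotone.ruledSurface_subset_or_neg (hC : HorizontallyMonotone heisenbergForm C)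
    (hint : ¬(interior C).Nonempty) (he : heisenbergForm e v ≠ 0)
    (hray : MapsTo (horizontalLine heisenbergForm p e) (Ici 0) C) :
    ruledSurface p e v ⊆ C ∨ ruledSurface p e (-v) ⊆ C := by
  by_contra! hcon
  simp only [ruledSurface, image2_subset_iff, not_forall] at hcon
  obtain ⟨⟨s₂, hs₂, σ₂, hσ₂, hout₂⟩, s₁, hs₁, σ₁, hσ₁, hout₁⟩ := hcon
  have hup := (hC.mapsTo_Ici_or_mapsTo_neg (hray hs₁) v).resolve_right fun h ↦ hout₁ (h hσ₁)
  have hdown := (hC.mapsTo_Ici_or_mapsTo_neg (hray hs₂) v).resolve_left fun h ↦ hout₂ (h hσ₂)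
  have hne : (s₂ - s₁) / 2 ≠ 0 := by
    intro h
    obtain rfl : s₂ = s₁ := by linarith
    exact hout₂ (hup hσ₂)
  have hmid : (0 : ℝ) ≤ (s₁ + s₂) / 2 := by linarith [hs₁.out, hs₂.out]
  have hline := horizontalLine_horizontalLine_smul heisenbergForm_self p e ((s₁ + s₂) / 2)
    ((s₂ - s₁) / 2)
  refine hint (hC.interior_nonempty_of_opposite_rays (e₁ := ((s₂ - s₁) / 2) • e) (e₂ := v) ?_
    (hray hmid) ?_ ?_)
  · simpa only [map_smul, smul_apply, smul_eq_mul] using mul_ne_zero hne he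
  · have hpar : (s₁ + s₂) / 2 + (s₂ - s₁) / 2 * -1 = s₁ := by ring
    rwa [hline, hpar]
  · have hpar : (s₁ + s₂) / 2 + (s₂ - s₁) / 2 * 1 = s₂ := by ring
    rwa [hline, hpar]

-- Among the three directions `v`, `v + e`, `v + 2 • e`, two have their surfaces on the same side.
lemma HorizontallyMonotone.interior_nonempty_of_ray (hC : HorizontallyMonotone heisenbergForm C)
    (he : heisenbergForm e v ≠ 0)
    (hray : MapsTo (horizontalLine heisenbergForm p e) (Ici 0) C) : (interior C).Nonempty := by
  by_contra hint
  have hdir : ∀ a : ℝ, heisenbergForm e (v + a • e) ≠ 0 := fun a ↦ by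
    simpa [heisenbergForm_self] using he
  have hside := fun a ↦ hC.ruledSurface_subset_or_neg hint (hdir a) hray
  have hpos : ∀ a b : ℝ, a < b → ruledSurface p e (v + a • e) ⊆ C →
      ¬ruledSurface p e (v + b • e) ⊆ C := fun a b hab ha hb ↦ by
    refine hint (hC.1.interior_nonempty_of_ruledSurface_add (hdir a) (sub_pos.2 hab) ha ?_)
    convert hb using 2
    module
  have hneg : ∀ a b : ℝ, a < b → ruledSurface p e (-(v + a • e)) ⊆ C →
      ¬ruledSurface p e (-(v + b • e)) ⊆ C := fun a b hab ha hb ↦ by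
    have hdir' : heisenbergForm e (-(v + b • e)) ≠ 0 := by
      rw [map_neg]
      exact neg_ne_zero.2 (hdir b)
    refine hint (hC.1.interior_nonempty_of_ruledSurface_add hdir' (sub_pos.2 hab) hb ?_)
    convert ha using 2
    module
  have h01 : (0 : ℝ) < 1 := one_pos
  have h12 : (1 : ℝ) < 2 := one_lt_two
  have h02 : (0 : ℝ) < 2 := two_pos
  grind

lemma HorizontallyMonotone.interior_nonempty (hC : HorizontallyMonotone heisenbergForm C)
    (hne : C.Nonempty) : (interior C).Nonempty := by
  obtain ⟨p, hp⟩ := hne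
  rcases hC.mapsTo_Ici_or_mapsTo_neg hp (1, 0) with hray | hray
  · exact hC.interior_nonempty_of_ray (v := (0, 1)) (by simp [heisenbergForm_apply]) hray
  · exact hC.interior_nonempty_of_ray (v := (0, 1)) (by simp [heisenbergForm_apply]) hray

lemma HorizontallyMonotone.frontier_ne_univ (hC : HorizontallyMonotone heisenbergForm C) :
    frontier C ≠ univ := by
  intro huniv
  rcases C.eq_empty_or_nonempty with rfl | hne
  · exact empty_ne_univ (frontier_empty.symm.trans huniv)
  · obtain ⟨p, hp⟩ := hC.interior_nonempty hne
    exact disjoint_interior_frontier.le_bot ⟨hp, huniv ▸ mem_univ p⟩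

end Heisenberg

section Slices

variable {V : Type*} [NormedAddCommGroup V] [NormedSpace ℝ V] {ω : V →L[ℝ] V →L[ℝ] ℝ}
  {C : Set ((V × ℝ) × ℝ)}

/-- The embedding of `V × ℝ` onto the slice `u = c` of `(V × ℝ) × ℝ`. -/
def sliceEmbedding (c : ℝ) (p : V × ℝ) : (V × ℝ) × ℝ :=
  ((p.1, c), p.2)

lemma sliceEmbedding_horizontalLine (c : ℝ) (p : V × ℝ) (v : V) (s : ℝ) :
    sliceEmbedding c (horizontalLine ω p v s) =
      horizontalLine (trivialExtension ω) (sliceEmbedding c p) (v, 0) s := by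
  simp [sliceEmbedding, horizontalLine]

lemma sliceEmbedding_eq_horizontalLine (c : ℝ) (p : V × ℝ) :
    sliceEmbedding c p = horizontalLine (trivialExtension ω) (sliceEmbedding 0 p) (0, 1) c := by
  simp [sliceEmbedding, horizontalLine]

lemma HorizontallyConvex.interior_nonempty_of_slices
    (hC : HorizontallyConvex (trivialExtension ω) C) {B : Set (V × ℝ)} (hB : IsOpen B)
    (hne : B.Nonempty) {c c' : ℝ} (hcc' : c ≠ c') (hc : MapsTo (sliceEmbedding c) B C)
    (hc' : MapsTo (sliceEmbedding c') B C) : (interior C).Nonempty := by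
  obtain ⟨p, hp⟩ := hne
  obtain ⟨u, hu⟩ := nonempty_uIoo.2 hcc'
  refine ⟨sliceEmbedding u p, mem_interior.2
    ⟨{z | (z.1.1, z.2) ∈ B ∧ z.1.2 ∈ uIoo c c'}, ?_, ?_, hp, hu⟩⟩
  · rintro ⟨⟨v, b⟩, t⟩ ⟨hvt, hb⟩
    change sliceEmbedding b (v, t) ∈ C
    have hmem : ∀ {a}, MapsTo (sliceEmbedding a) B C →
        a ∈ horizontalLine (trivialExtension ω) (sliceEmbedding 0 (v, t)) (0, 1) ⁻¹' C := by
      intro a ha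
      rw [mem_preimage, ← sliceEmbedding_eq_horizontalLine]
      exact ha hvt
    rw [sliceEmbedding_eq_horizontalLine (ω := ω)]
    exact (hC _ _).uIcc_subset (hmem hc) (hmem hc') (Ioo_subset_Icc_self hb)
  · exact IsOpen.and (hB.preimage (by fun_prop)) (isOpen_Ioo.preimage (by fun_prop))

lemma HorizontallyConvex.countable_setOf_interior_slice_nonempty [SecondCountableTopology V]
    (hC : HorizontallyConvex (trivialExtension ω) C) (hint : interior C = ∅) :
    {c | (interior (sliceEmbedding c ⁻¹' C)).Nonempty}.Countable := by
  have hsub : {c | (interior (sliceEmbedding c ⁻¹' C)).Nonempty} ⊆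
      ⋃ B ∈ TopologicalSpace.countableBasis (V × ℝ), {c | MapsTo (sliceEmbedding c) B C} := by
    rintro c ⟨p, hp⟩
    obtain ⟨B, hB, -, hBC⟩ := (TopologicalSpace.isBasis_countableBasis
      (V × ℝ)).exists_subset_of_mem_open hp isOpen_interior
    exact mem_biUnion hB (hBC.trans interior_subset)
  refine (Countable.biUnion (TopologicalSpace.countable_countableBasis _) fun B hB ↦ ?_).mono hsub
  refine Subsingleton.countable fun c hc c' hc' ↦ by_contra fun hcc' ↦ ?_
  exact (hC.interior_nonempty_of_slices (TopologicalSpace.isOpen_of_mem_countableBasis hB)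
    (TopologicalSpace.nonempty_of_mem_countableBasis hB) hcc' hc hc').ne_empty hint

lemma HorizontallyMonotone.frontier_ne_univ_of_slices [SecondCountableTopology V]
    (hC : HorizontallyMonotone (trivialExtension ω) C)
    (hslice : ∀ D, HorizontallyMonotone ω D → frontier D ≠ univ) : frontier C ≠ univ := by
  intro huniv
  have hinterior : interior C ∪ interior Cᶜ = ∅ := by
    rw [← compl_frontier_eq_union_interior, huniv, compl_univ]
  obtain ⟨hint, hint'⟩ := union_empty_iff.1 hinterior
  obtain ⟨c, hc⟩ := ((hC.1.countable_setOf_interior_slice_nonempty hint).union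
    (hC.2.countable_setOf_interior_slice_nonempty hint')).dense_compl ℝ |>.nonempty
  refine hslice (sliceEmbedding c ⁻¹' C)
    (hC.preimage fun p v ↦ ⟨_, _, sliceEmbedding_horizontalLine c p v⟩) ?_
  rw [← compl_empty_iff, compl_frontier_eq_union_interior, union_empty_iff]
  simpa [not_nonempty_iff_eq_empty] using hc

end Slices

section Coordinates

/-- The coordinates `(x, y, u, t)` on `ℍ × ℝ`, realized as `((ℝ × ℝ) × ℝ) × ℝ` with the points
grouped as `(((x, y), u), t)`. -/
def finFourCoordinates : ((ℝ × ℝ) × ℝ) × ℝ ≃ₜ (Fin 4 → ℝ) where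
  toFun p := ![p.1.1.1, p.1.1.2, p.1.2, p.2]
  invFun v := (((v 0, v 1), v 2), v 3)
  left_inv _ := rfl
  right_inv v := by ext i; fin_cases i <;> rfl
  continuous_toFun := by fun_prop
  continuous_invFun := by fun_prop

lemma finFourCoordinates_apply (p : ((ℝ × ℝ) × ℝ) × ℝ) :
    finFourCoordinates p = ![p.1.1.1, p.1.1.2, p.1.2, p.2] :=
  rfl

lemma finFourCoordinates_zero : finFourCoordinates 0 = 0 := by
  ext i
  fin_cases i <;> rfl

lemma finFourCoordinates_horizontalLine (p : ((ℝ × ℝ) × ℝ) × ℝ) (v : (ℝ × ℝ) × ℝ) (s : ℝ) :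
    finFourCoordinates (horizontalLine (trivialExtension heisenbergForm) p v s) =
      hmul (finFourCoordinates p) ![s * v.1.1, s * v.1.2, s * v.2, 0] := by
  ext i
  fin_cases i <;>
    simp [finFourCoordinates_apply, horizontalLine, hmul, heisenbergForm_apply]
  ring

variable {E : Set (Fin 4 → ℝ)}

lemma trivialExtension_heisenbergForm_self (v : (ℝ × ℝ) × ℝ) :
    trivialExtension heisenbergForm v v = 0 :=
  heisenbergForm_self v.1

lemma HRConvex.horizontallyConvex (hE : HRConvex E) :
    HorizontallyConvex (trivialExtension heisenbergForm) (finFourCoordinates ⁻¹' E) := by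
  refine fun p v ↦ ⟨fun a ha b hb x hx ↦ ?_⟩
  rw [← segment_eq_Icc (hx.1.trans hx.2), segment_eq_image'] at hx
  obtain ⟨s, hs, rfl⟩ := hx
  set q := horizontalLine (trivialExtension heisenbergForm) p v a with hq
  have hmul_eq : ∀ r, hmul (finFourCoordinates q)
      ![r * ((b - a) • v).1.1, r * ((b - a) • v).1.2, r * ((b - a) • v).2, 0] =
        finFourCoordinates
          (horizontalLine (trivialExtension heisenbergForm) p v (a + (b - a) * r)) := fun r ↦ by
    rw [← finFourCoordinates_horizontalLine, hq,
      horizontalLine_horizontalLine_smul trivialExtension_heisenbergForm_self]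
  have hend : hmul (finFourCoordinates q)
      ![((b - a) • v).1.1, ((b - a) • v).1.2, ((b - a) • v).2, 0] ∈ E := by
    have h := hmul_eq 1
    simp only [one_mul, mul_one, add_sub_cancel] at h
    rw [h]
    exact hb
  have hpoint := hE _ ha _ _ _ hend s hs.1 hs.2
  rwa [hmul_eq, mul_comm] at hpoint

lemma PreciselyMonotone.horizontallyMonotone (hE : PreciselyMonotone E) :
    HorizontallyMonotone (trivialExtension heisenbergForm) (finFourCoordinates ⁻¹' E) :=
  ⟨hE.1.horizontallyConvex, hE.2.horizontallyConvex⟩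

end Coordinates

/-- Trichotomy at a boundary point (the origin) of a nontrivial precisely monotone
set in `ℍ×ℝ`. -/
theorem monotone_origin_trichotomy
    (E : Set (Fin 4 → ℝ)) (hE : PreciselyMonotone E)
    (h1 : E ≠ ∅) (h2 : E ≠ Set.univ)
    (h0 : (0 : Fin 4 → ℝ) ∈ frontier E) :
    frontier E = {v : Fin 4 → ℝ | v 3 = 0} ∨
    (![0, 0, 1, 0] : Fin 4 → ℝ) ∈ interior E ∪ interior Eᶜ ∨
    ∃ a b : ℝ, (a, b) ≠ ((0 : ℝ), (0 : ℝ)) ∧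
      (![a, b, 0, 0] : Fin 4 → ℝ) ∈ interior E ∪ interior Eᶜ := by
  by_contra! hcon
  obtain ⟨hne, hvertical, hplane⟩ := hcon
  rw [← compl_frontier_eq_union_interior, notMem_compl_iff] at hvertical
  have hC := hE.horizontallyMonotone
  have hplane' : ∀ v, ((v, 0), 0) ∈ finFourCoordinates ⁻¹' frontier E := fun v ↦ by
    rcases eq_or_ne v 0 with rfl | hv
    · rwa [← finFourCoordinates_zero] at h0
    · have := hplane v.1 v.2 hv
      rwa [← compl_frontier_eq_union_interior, notMem_compl_iff] at this
  rw [Homeomorph.preimage_frontier] at hplane'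
  have hzero := hC.mem_frontier_of_fst heisenbergForm_self heisenbergForm_ne_zero
    (by rwa [← Homeomorph.preimage_frontier]) hplane'
  rcases hC.frontier_eq_or_eq_univ trivialExtension_heisenbergForm_self
    (trivialExtension_ne_zero heisenbergForm_ne_zero) hzero with hfrontier | huniv
  · rw [← Homeomorph.preimage_frontier] at hfrontier
    exact hne (finFourCoordinates.surjective.preimage_injective hfrontier)
  · exact hC.frontier_ne_univ_of_slices (fun _ hD ↦ hD.frontier_ne_univ) huniv
end
end

section
/- Let E ⊆ ℝ⁴ = ℍ×ℝ be precisely monotone. Assume the origin (0,0,0,0) ∈ ∂E and that (p,q,0,0) ∈ Int(E) for some (p,q) ≠ (0,0). Then there exist an open neighborhood Ω of the origin in ℝ⁴ and real numbers r, s, c, b with rp + sq ≠ 0 such that ∂E ∩ Ω = {(x,y,u,t) ∈ ℝ⁴ : rx + sy + cu + bt = 0} ∩ Ω. -/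
/- The group `ℍ×ℝ`: `ℝ⁴` with coordinates `(x,y,u,t)` and law
`(x,y,u,t)·(x',y',u',t') = (x+x', y+y', u+u', t+t'+2(yx'−y'x))`. -/

noncomputable section

/-!
Coordinates in which `(p, q, 0, 0)` becomes `(1, 0, 0, 0)` and `dt = 2 s dy` along horizontal curves
make `E` near the origin the epigraph `s > φ(y, u, t)` of a continuous function, since two
horizontal moves reach every nearby point.

On the slice `u = k y` this is a monotone epigraph in the Heisenberg group. A horizontal line
meeting its boundary twice is contained in it; by a fixed-point argument such a line passes through
every boundary point, and it is unique. Two of these lines cannot be joined by a third horizontal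
line, which forces any two of them to be coplanar, so the boundary is ruled by lines of one plane.
The planes of all slices agree along `y = u = 0`, and since `φ` is affine in `u` they fit together
to a single hyperplane.
-/

open Set Filter Topology

section Epigraph

variable {X : Type*} [TopologicalSpace X]

/-- Over the open set `U`, the set `F ⊆ ℝ × X` is the epigraph of the continuous function `ψ`, with
no condition on which points of the graph itself belong to `F`. -/
structure IsEpigraphOn (F : Set (ℝ × X)) (ψ : X → ℝ) (U : Set X) : Prop where
  isOpen : IsOpen U
  continuousOn : ContinuousOn ψ U
  mem_of_lt {w : X} (hw : w ∈ U) {s : ℝ} (hs : ψ w < s) : (s, w) ∈ F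
  notMem_of_lt {w : X} (hw : w ∈ U) {s : ℝ} (hs : s < ψ w) : (s, w) ∉ F

namespace IsEpigraphOn

variable {F : Set (ℝ × X)} {ψ : X → ℝ} {U : Set X} {w : X} {s : ℝ}

theorem continuousAt (hF : IsEpigraphOn F ψ U) (hw : w ∈ U) : ContinuousAt ψ w :=
  hF.continuousOn.continuousAt (hF.isOpen.mem_nhds hw)

theorem eventually_snd_mem (hF : IsEpigraphOn F ψ U) (hw : w ∈ U) :
    ∀ᶠ P in 𝓝 (s, w), P.2 ∈ U :=
  continuousAt_snd.eventually_mem (hF.isOpen.mem_nhds hw)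

theorem mem_interior_of_lt (hF : IsEpigraphOn F ψ U) (hw : w ∈ U) (hs : ψ w < s) :
    (s, w) ∈ interior F := by
  have hlt : ∀ᶠ P in 𝓝 (s, w), ψ P.2 < P.1 :=
    ((hF.continuousAt hw).comp continuousAt_snd).eventually_lt continuousAt_fst hs
  rw [mem_interior_iff_mem_nhds]
  filter_upwards [hlt, hF.eventually_snd_mem hw] with P hP hPU
  exact hF.mem_of_lt hPU hP

theorem mem_interior_compl_of_lt (hF : IsEpigraphOn F ψ U) (hw : w ∈ U) (hs : s < ψ w) :
    (s, w) ∈ interior Fᶜ := by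
  have hlt : ∀ᶠ P in 𝓝 (s, w), P.1 < ψ P.2 :=
    continuousAt_fst.eventually_lt ((hF.continuousAt hw).comp continuousAt_snd) hs
  rw [mem_interior_iff_mem_nhds]
  filter_upwards [hlt, hF.eventually_snd_mem hw] with P hP hPU
  exact hF.notMem_of_lt hPU hP

theorem mk_mem_frontier (hF : IsEpigraphOn F ψ U) (hw : w ∈ U) : (ψ w, w) ∈ frontier F := by
  have hcont : Tendsto (fun r : ℝ => (r, w)) (𝓝 (ψ w)) (𝓝 (ψ w, w)) :=
    Continuous.tendsto (by fun_prop) _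
  rw [frontier_eq_closure_inter_closure]
  constructor
  · refine mem_closure_of_tendsto (hcont.mono_left (nhdsWithin_le_nhds (s := Ioi (ψ w)))) ?_
    exact eventually_nhdsWithin_of_forall fun r hr => hF.mem_of_lt hw hr
  · refine mem_closure_of_tendsto (hcont.mono_left (nhdsWithin_le_nhds (s := Iio (ψ w)))) ?_
    exact eventually_nhdsWithin_of_forall fun r hr => hF.notMem_of_lt hw hr

theorem mk_mem_frontier_iff (hF : IsEpigraphOn F ψ U) (hw : w ∈ U) :
    (s, w) ∈ frontier F ↔ ψ w = s := by
  refine ⟨fun hs => ?_, fun hs => hs ▸ hF.mk_mem_frontier hw⟩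
  rcases lt_trichotomy (ψ w) s with hlt | heq | hlt
  · exact absurd hs (disjoint_left.1 disjoint_interior_frontier (hF.mem_interior_of_lt hw hlt))
  · exact heq
  · rw [← frontier_compl] at hs
    exact absurd hs
      (disjoint_left.1 disjoint_interior_frontier (hF.mem_interior_compl_of_lt hw hlt))

theorem apply_snd_eq_fst (hF : IsEpigraphOn F ψ U) {P : ℝ × X} (hPU : P.2 ∈ U)
    (hP : P ∈ frontier F) : ψ P.2 = P.1 :=
  (hF.mk_mem_frontier_iff hPU).1 hP

theorem mem_of_mem_frontier_of_lt (hF : IsEpigraphOn F ψ U) {P : ℝ × X} (hPU : P.2 ∈ U)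
    (hP : P ∈ frontier F) (hs : P.1 < s) : (s, P.2) ∈ F :=
  hF.mem_of_lt hPU ((hF.apply_snd_eq_fst hPU hP).trans_lt hs)

theorem notMem_of_mem_frontier_of_lt (hF : IsEpigraphOn F ψ U) {P : ℝ × X} (hPU : P.2 ∈ U)
    (hP : P ∈ frontier F) (hs : s < P.1) : (s, P.2) ∉ F :=
  hF.notMem_of_lt hPU (hs.trans_eq (hF.apply_snd_eq_fst hPU hP).symm)

theorem comp {Y : Type*} [TopologicalSpace Y] (hF : IsEpigraphOn F ψ U) {g : Y → X}
    (hg : Continuous g) : IsEpigraphOn (Prod.map id g ⁻¹' F) (ψ ∘ g) (g ⁻¹' U) where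
  isOpen := hF.isOpen.preimage hg
  continuousOn := hF.continuousOn.comp hg.continuousOn fun _ hw => hw
  mem_of_lt hw _ hs := hF.mem_of_lt hw hs
  notMem_of_lt hw _ hs := hF.notMem_of_lt hw hs

end IsEpigraphOn

theorem exists_threshold_of_ordConnected {S : Set ℝ} (hS : S.OrdConnected) (hS' : Sᶜ.OrdConnected)
    {lo hi : ℝ} (hlo : lo ∉ S) (hhi : hi ∈ S) (hle : lo ≤ hi) :
    ∃ r ∈ Icc lo hi, (∀ s, r < s → s ∈ S) ∧ ∀ s, s < r → s ∉ S := by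
  have hup : ∀ s ∉ S, s ≤ hi := fun s hs => by
    by_contra! hlt
    exact hS'.out hlo hs ⟨hle, hlt.le⟩ hhi
  have hbdd : BddAbove Sᶜ := ⟨hi, hup⟩
  refine ⟨sSup Sᶜ, ⟨le_csSup hbdd hlo, csSup_le ⟨lo, hlo⟩ hup⟩, fun s hs => ?_, fun s hs hsS => ?_⟩
  · exact notMem_compl_iff.1 fun h => hs.not_ge (le_csSup hbdd h)
  · obtain ⟨s', hs', hlt⟩ := exists_lt_of_lt_csSup ⟨lo, hlo⟩ hs
    exact hs' (hS.out hsS hhi ⟨hlt.le, hup s' hs'⟩)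

end Epigraph

section HorizontalLines

/-- In the polarized coordinates `(s, y, t)` on the Heisenberg group, whose horizontal curves are
those with `dt = 2 s dy`: the point over `y` of the horizontal line through `P` along which
`ds/dy = a`. -/
def hline (a : ℝ) (P : ℝ × ℝ × ℝ) (y : ℝ) : ℝ × ℝ × ℝ :=
  (P.1 + a * (y - P.2.1), y, P.2.2 + (y - P.2.1) * (2 * P.1 + a * (y - P.2.1)))

/-- Convexity along the horizontal lines `hline`. -/
def LineConvex (C : Set (ℝ × ℝ × ℝ)) : Prop := ∀ a P, (hline a P ⁻¹' C).OrdConnected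

/-- Precise monotonicity along the horizontal lines `hline`. -/
def LineMonotone (F : Set (ℝ × ℝ × ℝ)) : Prop := LineConvex F ∧ LineConvex Fᶜ

variable {a : ℝ} {P Q : ℝ × ℝ × ℝ} {C : Set (ℝ × ℝ × ℝ)}

@[simp] theorem hline_self (a : ℝ) (P : ℝ × ℝ × ℝ) : hline a P P.2.1 = P := by
  simp [hline]

@[simp] theorem hline_hline (a : ℝ) (P : ℝ × ℝ × ℝ) (z y : ℝ) :
    hline a (hline a P z) y = hline a P y := by
  simp only [hline, Prod.mk.injEq, true_and]
  constructor <;> ring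

@[fun_prop] theorem continuous_hline {X : Type*} [TopologicalSpace X] {a y : X → ℝ}
    {P : X → ℝ × ℝ × ℝ} (ha : Continuous a) (hP : Continuous P) (hy : Continuous y) :
    Continuous fun x => hline (a x) (P x) (y x) := by
  unfold hline
  fun_prop

theorem exists_hline_eq (hne : Q.2.1 ≠ P.2.1)
    (hPQ : Q.2.2 - P.2.2 = (Q.2.1 - P.2.1) * (P.1 + Q.1)) : ∃ a, hline a P Q.2.1 = Q := by
  have hne' : Q.2.1 - P.2.1 ≠ 0 := sub_ne_zero.2 hne
  refine ⟨(Q.1 - P.1) / (Q.2.1 - P.2.1), ?_⟩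
  rw [hline, div_mul_cancel₀ _ hne']
  refine Prod.ext (by ring) (Prod.ext rfl ?_)
  linear_combination -hPQ

theorem eventually_hline_snd_mem {U : Set (ℝ × ℝ)} (hU : IsOpen U) {f : ℝ → ℝ} (hf : Continuous f)
    {x : ℝ} (hx : (hline a P (f x)).2 ∈ U) : ∀ᶠ z in 𝓝 x, (hline a P (f z)).2 ∈ U :=
  (by fun_prop : Continuous fun z => (hline a P (f z)).2).continuousAt.eventually_mem
    (hU.mem_nhds hx)

theorem LineConvex.hline_mem (hC : LineConvex C) {y₁ y₂ y₃ : ℝ} (h₁ : hline a P y₁ ∈ C)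
    (h₃ : hline a P y₃ ∈ C) (hy₂ : y₂ ∈ uIcc y₁ y₃) : hline a P y₂ ∈ C :=
  (hC a P).uIcc_subset h₁ h₃ hy₂

-- The line is tilted so as to pass through the two perturbed points.
theorem LineConvex.hline_mem_closure_compl (hC : LineConvex C) {y₁ y₂ y₃ : ℝ} (hne : y₁ ≠ y₂)
    (hy₂ : y₂ ∈ uIcc y₁ y₃)
    (hfreq : ∃ᶠ ε in 𝓝 (0 : ℝ), ((hline a P y₁).1 + ε, (hline a P y₁).2) ∈ C ∧
      ((hline a P y₂).1 - ε, (hline a P y₂).2) ∉ C) :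
    hline a P y₃ ∈ closure Cᶜ := by
  set slope : ℝ → ℝ := fun ε => a + 2 * ε / (y₁ - y₂) with slope_def
  set base : ℝ → ℝ × ℝ × ℝ := fun ε => ((hline a P y₂).1 - ε, (hline a P y₂).2) with base_def
  have hbase (ε : ℝ) : hline (slope ε) (base ε) y₂ = base ε := hline_self _ _
  have hstart (ε : ℝ) :
      hline (slope ε) (base ε) y₁ = ((hline a P y₁).1 + ε, (hline a P y₁).2) := by
    have hslope : slope ε * (y₁ - y₂) = a * (y₁ - y₂) + 2 * ε := by
      rw [slope_def, add_mul, div_mul_cancel₀ _ (sub_ne_zero.2 hne)]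
    simp only [base_def, hline, Prod.mk.injEq, true_and, hslope]
    constructor <;> ring
  have hlim : Tendsto (fun ε => hline (slope ε) (base ε) y₃) (𝓝 0) (𝓝 (hline a P y₃)) := by
    have hcont : Continuous fun ε => hline (slope ε) (base ε) y₃ := by fun_prop
    simpa [slope_def, base_def] using hcont.tendsto 0
  refine mem_closure_of_frequently_of_tendsto (hfreq.mono fun ε hε h₃ => hε.2 ?_) hlim
  have hmem := hC.hline_mem (hstart ε ▸ hε.1) h₃ hy₂
  rwa [hbase] at hmem

theorem LineConvex.hline_mem_closure (hC : LineConvex C) {y₂ y₃ : ℝ} (hP : P ∈ closure C)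
    (hy₃ : hline a P y₃ ∈ interior C) (hy₂ : y₂ ∈ uIcc P.2.1 y₃) : hline a P y₂ ∈ closure C := by
  obtain ⟨θ, hθ, rfl⟩ : ∃ θ ∈ Icc (0 : ℝ) 1, P.2.1 + θ * (y₃ - P.2.1) = y₂ := by
    rwa [← segment_eq_uIcc, segment_eq_image'] at hy₂
  have hend : ∀ᶠ Q in 𝓝 P, hline a Q y₃ ∈ interior C :=
    (by fun_prop : Continuous fun Q => hline a Q y₃).continuousAt.eventually_mem
      (isOpen_interior.mem_nhds hy₃)
  have hlim : Tendsto (fun Q : ℝ × ℝ × ℝ => hline a Q (Q.2.1 + θ * (y₃ - Q.2.1))) (𝓝 P)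
      (𝓝 (hline a P (P.2.1 + θ * (y₃ - P.2.1)))) := Continuous.tendsto (by fun_prop) P
  refine mem_closure_of_frequently_of_tendsto ?_ hlim
  refine ((mem_closure_iff_frequently.1 hP).and_eventually hend).mono fun Q hQ => ?_
  refine hC.hline_mem ((hline_self a Q).symm ▸ hQ.1) (interior_subset hQ.2) ?_
  rw [← segment_eq_uIcc, segment_eq_image']
  exact ⟨θ, hθ, rfl⟩

theorem LineConvex.mem_interior (hC : LineConvex C) {e : ℝ}
    (hleft : hline a P (P.2.1 - e) ∈ interior C) (hright : hline a P (P.2.1 + e) ∈ interior C) :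
    P ∈ interior C := by
  have hmem {f : ℝ × ℝ × ℝ → ℝ} (hf : Continuous f) (hfP : hline a P (f P) ∈ interior C) :
      ∀ᶠ Q in 𝓝 P, hline a Q (f Q) ∈ C :=
    ((by fun_prop : Continuous fun Q => hline a Q (f Q)).continuousAt.eventually_mem
      (isOpen_interior.mem_nhds hfP)).mono fun _ hQ => interior_subset hQ
  rw [mem_interior_iff_mem_nhds]
  filter_upwards [hmem (f := fun Q => Q.2.1 - e) (by fun_prop) hleft,
    hmem (f := fun Q => Q.2.1 + e) (by fun_prop) hright] with Q hQl hQr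
  refine hline_self a Q ▸ hC.hline_mem hQl hQr (mem_uIcc.2 ?_)
  rcases le_total 0 e with he | he
  · left; constructor <;> linarith
  · right; constructor <;> linarith

end HorizontalLines

namespace LineMonotone

variable {F : Set (ℝ × ℝ × ℝ)} {ψ : ℝ × ℝ → ℝ} {U : Set (ℝ × ℝ)} {P : ℝ × ℝ × ℝ} {a : ℝ}

theorem hline_mem_frontier_of_mem_uIcc (hF : LineMonotone F) (hψ : IsEpigraphOn F ψ U)
    {y₁ y₂ y₃ : ℝ} (hne : y₁ ≠ y₂)
    (hU₁ : (hline a P y₁).2 ∈ U) (h₁ : hline a P y₁ ∈ frontier F)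
    (hU₂ : (hline a P y₂).2 ∈ U) (h₂ : hline a P y₂ ∈ frontier F) (hy₂ : y₂ ∈ uIcc y₁ y₃) :
    hline a P y₃ ∈ frontier F := by
  rw [frontier_eq_closure_inter_closure]
  constructor
  · rw [← compl_compl F]
    refine hF.2.hline_mem_closure_compl hne hy₂
      (Frequently.filter_mono ?_ (nhdsWithin_le_nhds (s := Iio 0)))
    refine (eventually_nhdsWithin_of_forall fun ε hε => ⟨?_, ?_⟩).frequently
    · exact hψ.notMem_of_mem_frontier_of_lt hU₁ h₁ (by linarith [mem_Iio.1 hε])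
    · exact not_not.2 (hψ.mem_of_mem_frontier_of_lt hU₂ h₂ (by linarith [mem_Iio.1 hε]))
  · refine hF.1.hline_mem_closure_compl hne hy₂
      (Frequently.filter_mono ?_ (nhdsWithin_le_nhds (s := Ioi 0)))
    refine (eventually_nhdsWithin_of_forall fun ε hε => ⟨?_, ?_⟩).frequently
    · exact hψ.mem_of_mem_frontier_of_lt hU₁ h₁ (by linarith [mem_Ioi.1 hε])
    · exact hψ.notMem_of_mem_frontier_of_lt hU₂ h₂ (by linarith [mem_Ioi.1 hε])

theorem hline_mem_frontier (hF : LineMonotone F) (hψ : IsEpigraphOn F ψ U)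
    {y₁ y₂ : ℝ} (hne : y₁ ≠ y₂)
    (hU₁ : (hline a P y₁).2 ∈ U) (h₁ : hline a P y₁ ∈ frontier F)
    (hU₂ : (hline a P y₂).2 ∈ U) (h₂ : hline a P y₂ ∈ frontier F) (y : ℝ) :
    hline a P y ∈ frontier F := by
  by_cases hy : y₂ ∈ uIcc y₁ y
  · exact hF.hline_mem_frontier_of_mem_uIcc hψ hne hU₁ h₁ hU₂ h₂ hy
  -- Otherwise first produce a boundary point slightly beyond `y₂`.
  obtain ⟨e, hU₃, he⟩ : ∃ e : ℝ, (hline a P (y₂ + e * (y₂ - y₁))).2 ∈ U ∧ 0 < e :=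
    ((eventually_hline_snd_mem hψ.isOpen (f := fun e => y₂ + e * (y₂ - y₁)) (by fun_prop)
      (x := 0) (by simpa using hU₂)).filter_mono nhdsWithin_le_nhds |>.and
        self_mem_nhdsWithin : ∀ᶠ e in 𝓝[>] (0 : ℝ), _ ∧ _).exists
  set y₃ := y₂ + e * (y₂ - y₁) with hy₃
  have hne₃ : y₃ ≠ y₂ := by
    simpa [hy₃, he.ne'] using sub_ne_zero.2 hne.symm
  rw [mem_uIcc] at hy
  have h₃ : hline a P y₃ ∈ frontier F := by
    refine hF.hline_mem_frontier_of_mem_uIcc hψ hne hU₁ h₁ hU₂ h₂ (mem_uIcc.2 ?_)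
    rcases hne.lt_or_gt with h | h
    · left; constructor <;> nlinarith
    · right; constructor <;> nlinarith
  refine hF.hline_mem_frontier_of_mem_uIcc hψ hne₃ hU₃ h₃ hU₂ h₂ (mem_uIcc.2 ?_)
  rcases hne.lt_or_gt with h | h
  · right; constructor
    · by_contra! hlt; exact hy (Or.inl ⟨h.le, hlt.le⟩)
    · nlinarith
  · left; constructor
    · nlinarith
    · by_contra! hlt; exact hy (Or.inr ⟨hlt.le, h.le⟩)

end LineMonotone

-- The data are those of three lines `hline aᵢ (Sᵢ, 0, Tᵢ)`, any two of which are coplanar.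
theorem sub_eq_mul_of_pairwise_sq_eq {a a₀ a₁ S S₀ S₁ T T₀ T₁ c : ℝ} (hT : T₁ ≠ T₀)
    (h₀₁ : (S₁ - S₀) ^ 2 = (T₁ - T₀) * (a₁ - a₀)) (h₀ : (S - S₀) ^ 2 = (T - T₀) * (a - a₀))
    (h₁ : (S - S₁) ^ 2 = (T - T₁) * (a - a₁)) (hc : S₁ - S₀ = c * (T₁ - T₀)) :
    S - S₀ = c * (T - T₀) ∧ a - a₀ = c ^ 2 * (T - T₀) := by
  have hT' : T₁ - T₀ ≠ 0 := sub_ne_zero.2 hT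
  obtain rfl : S₁ = S₀ + c * (T₁ - T₀) := by linear_combination hc
  obtain rfl : a₁ = a₀ + c ^ 2 * (T₁ - T₀) :=
    mul_left_cancel₀ hT' (by linear_combination -h₀₁)
  have hlin : a - a₀ = 2 * c * (S - S₀) - c ^ 2 * (T - T₀) :=
    mul_left_cancel₀ hT' (by linear_combination h₁ - h₀)
  have hS : S - S₀ - c * (T - T₀) = 0 := by
    refine pow_eq_zero_iff two_ne_zero |>.1 ?_
    linear_combination h₀ + (T - T₀) * hlin
  exact ⟨by linear_combination hS, by linear_combination hlin + 2 * c * hS⟩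

theorem exists_sub_eq_mul_add {ψ : ℝ × ℝ → ℝ} {U : Set (ℝ × ℝ)} (hU : IsOpen U)
    (hψ : ContinuousOn ψ U) {w : ℝ × ℝ} (hw : w ∈ U) :
    ∃ h ≠ 0, ∃ t, (w.1 + h, t) ∈ U ∧ t - w.2 = h * (ψ w + ψ (w.1 + h, t)) := by
  set M := |ψ w| + 1
  have hM : 0 < M := by positivity
  obtain ⟨r, hr, hball⟩ : ∃ r > 0, ∀ ⦃z⦄, dist z w < r → z ∈ U ∧ |ψ z| < M :=
    Metric.eventually_nhds_iff.1 ((hU.eventually_mem hw).and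
      ((hψ.continuousAt (hU.mem_nhds hw)).abs.eventually_lt continuousAt_const (lt_add_one _)))
  set h := r / (4 * M)
  have hh : 0 < h := by positivity
  have hhr : h ≤ r / 4 := div_le_div_of_nonneg_left hr.le four_pos (by simp [M])
  have hhM : h * M = r / 4 := by simp only [h]; field_simp
  set I := Icc (w.2 - r / 2) (w.2 + r / 2)
  have hnear {t : ℝ} (ht : t ∈ I) : dist (w.1 + h, t) w < r := by
    rw [Prod.dist_eq, max_lt_iff, Real.dist_eq, Real.dist_eq, abs_lt, abs_lt]
    exact ⟨⟨by linarith, by linarith⟩, by linarith [ht.1], by linarith [ht.2]⟩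
  have hmaps : MapsTo (fun t => w.2 + h * (ψ w + ψ (w.1 + h, t))) I I := fun t ht => by
    obtain ⟨hlo, hhi⟩ := abs_lt.1 (hball (hnear ht)).2
    obtain ⟨hlo', hhi'⟩ := abs_lt.1 (lt_add_one |ψ w|)
    constructor <;> nlinarith
  have hcont : ContinuousOn (fun t => w.2 + h * (ψ w + ψ (w.1 + h, t))) I := by
    have hcomp : ContinuousOn (fun t => ψ (w.1 + h, t)) I :=
      hψ.comp (by fun_prop) fun t ht => (hball (hnear ht)).1
    exact continuousOn_const.add (continuousOn_const.mul (continuousOn_const.add hcomp))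
  obtain ⟨t, ht, hfix⟩ := exists_mem_Icc_isFixedPt_of_mapsTo hcont (by linarith) hmaps
  exact ⟨h, hh.ne', t, (hball (hnear ht)).1, sub_eq_of_eq_add' hfix.symm⟩

namespace LineMonotone

variable {a a' : ℝ} {F : Set (ℝ × ℝ × ℝ)} {ψ : ℝ × ℝ → ℝ} {U : Set (ℝ × ℝ)} {P : ℝ × ℝ × ℝ}

-- The line `m` leaves `Fᶜ` and comes back: over `y - 2h` it is vertically below the line of slope
-- `a`, over `y - h/2` and `y + 2h` vertically above, resp. below, the line of slope `a'`.
theorem not_lt_of_hline_mem_frontier (hF : LineMonotone F) (hψ : IsEpigraphOn F ψ U)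
    (hPU : P.2 ∈ U) (ha : ∀ y, hline a P y ∈ frontier F) (ha' : ∀ y, hline a' P y ∈ frontier F) :
    ¬ a < a' := by
  intro hlt
  have hnear (slope k : ℝ) : ∀ᶠ h in 𝓝[>] (0 : ℝ), (hline slope P (P.2.1 + k * h)).2 ∈ U :=
    (eventually_hline_snd_mem hψ.isOpen (f := fun h => P.2.1 + k * h) (by fun_prop)
      (by simpa using hPU)).filter_mono nhdsWithin_le_nhds
  obtain ⟨h, hUl, hUm, hUr, hh⟩ := ((hnear a (-2)).and ((hnear a' (-1 / 2)).and
    ((hnear a' 2).and self_mem_nhdsWithin))).exists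
  have hdh : 0 < (a' - a) * h := mul_pos (sub_pos.2 hlt) hh
  set m := hline (a + (a' - a) / 3)
    (P.1 + (a' - a) * h / 2, P.2.1, P.2.2 + 2 * (a' - a) * h ^ 2 / 3) with hm
  have hml : m (P.2.1 + -2 * h) = ((hline a P (P.2.1 + -2 * h)).1 - (a' - a) * h / 6,
      (hline a P (P.2.1 + -2 * h)).2) := by
    simp only [hm, hline, Prod.mk.injEq, true_and]
    constructor <;> ring
  have hmm : m (P.2.1 + -1 / 2 * h) = ((hline a' P (P.2.1 + -1 / 2 * h)).1 +
      5 * ((a' - a) * h) / 6, (hline a' P (P.2.1 + -1 / 2 * h)).2) := by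
    simp only [hm, hline, Prod.mk.injEq, true_and]
    constructor <;> ring
  have hmr : m (P.2.1 + 2 * h) = ((hline a' P (P.2.1 + 2 * h)).1 - 5 * ((a' - a) * h) / 6,
      (hline a' P (P.2.1 + 2 * h)).2) := by
    simp only [hm, hline, Prod.mk.injEq, true_and]
    constructor <;> ring
  have hl : m (P.2.1 + -2 * h) ∈ Fᶜ :=
    hml ▸ hψ.notMem_of_mem_frontier_of_lt hUl (ha _) (by linarith)
  have hr : m (P.2.1 + 2 * h) ∈ Fᶜ :=
    hmr ▸ hψ.notMem_of_mem_frontier_of_lt hUr (ha' _) (by linarith)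
  have hmid : m (P.2.1 + -1 / 2 * h) ∈ F :=
    hmm ▸ hψ.mem_of_mem_frontier_of_lt hUm (ha' _) (by linarith)
  exact hF.2.hline_mem hl hr (mem_uIcc.2 (.inl ⟨by linarith, by linarith⟩)) hmid

theorem slope_unique (hF : LineMonotone F) (hψ : IsEpigraphOn F ψ U)
    (hPU : P.2 ∈ U) (ha : ∀ y, hline a P y ∈ frontier F) (ha' : ∀ y, hline a' P y ∈ frontier F) :
    a = a' :=
  le_antisymm (not_lt.1 (hF.not_lt_of_hline_mem_frontier hψ hPU ha' ha))
    (not_lt.1 (hF.not_lt_of_hline_mem_frontier hψ hPU ha ha'))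

theorem hline_add_or_sub_mem_frontier (hF : LineMonotone F) (hP : P ∈ frontier F) {y e : ℝ}
    (he : P.2.1 + e ∈ uIcc y P.2.1) (hy : hline a P y ∈ frontier F) :
    hline a P (P.2.1 + e) ∈ frontier F ∨ hline a P (P.2.1 - e) ∈ frontier F := by
  have he' : P.2.1 + e ∈ uIcc y (P.2.1 - e) := by
    rw [mem_uIcc] at he ⊢
    rcases he with he | he
    · exact .inl ⟨by linarith, by linarith⟩
    · exact .inr ⟨by linarith, by linarith⟩
  have same_side {C : Set (ℝ × ℝ × ℝ)} (hC : LineConvex C) (hPC : P ∈ frontier C)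
      (hright : hline a P (P.2.1 + e) ∈ interior C) (hleft : hline a P (P.2.1 - e) ∈ interior C) :
      False :=
    disjoint_left.1 disjoint_interior_frontier (hC.mem_interior hleft hright) hPC
  have opposite_sides {C : Set (ℝ × ℝ × ℝ)} (hC : LineConvex C) (hyC : hline a P y ∈ frontier C)
      (hright : hline a P (P.2.1 + e) ∈ interior Cᶜ) (hleft : hline a P (P.2.1 - e) ∈ interior C) :
      False := by
    have hcl := hC.hline_mem_closure (frontier_subset_closure hyC) (by rwa [hline_hline]) he'
    rw [hline_hline] at hcl
    exact (interior_compl (s := C) ▸ hright) hcl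
  by_contra! hnot
  rw [← mem_compl_iff, ← mem_compl_iff, compl_frontier_eq_union_interior] at hnot
  have hPc : P ∈ frontier Fᶜ := by rwa [frontier_compl]
  have hyc : hline a P y ∈ frontier Fᶜ := by rwa [frontier_compl]
  rcases hnot with ⟨hright | hright, hleft | hleft⟩
  · exact same_side hF.1 hP hright hleft
  · exact opposite_sides hF.2 hyc (by rwa [compl_compl]) hleft
  · exact opposite_sides hF.1 hy hright hleft
  · exact same_side hF.2 hPc hright hleft

theorem slope_eq_of_hline_mem_frontier (hF : LineMonotone F) (hψ : IsEpigraphOn F ψ U)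
    (hPU : P.2 ∈ U) (ha : ∀ y, hline a P y ∈ frontier F) {y : ℝ} (hy : y ≠ P.2.1)
    (hmem : hline a' P y ∈ frontier F) : a' = a := by
  have hP : P ∈ frontier F := by simpa using ha P.2.1
  have hnear (k : ℝ) : ∀ᶠ θ in 𝓝[>] (0 : ℝ), (hline a' P (P.2.1 + k * θ)).2 ∈ U :=
    (eventually_hline_snd_mem hψ.isOpen (f := fun θ => P.2.1 + k * θ) (by fun_prop)
      (by simpa using hPU)).filter_mono nhdsWithin_le_nhds
  obtain ⟨θ, hUr, hUl, hθ⟩ := ((hnear (y - P.2.1)).and ((hnear (-(y - P.2.1))).and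
    (Ioo_mem_nhdsGT zero_lt_one))).exists
  have hsub : (y - P.2.1) * θ ≠ 0 := mul_ne_zero (sub_ne_zero.2 hy) hθ.1.ne'
  have hseg : P.2.1 + (y - P.2.1) * θ ∈ uIcc y P.2.1 := by
    rw [uIcc_comm, ← segment_eq_uIcc, segment_eq_image']
    exact ⟨θ, ⟨hθ.1.le, hθ.2.le⟩, by simp [mul_comm]⟩
  have extend {e : ℝ} (he : e ≠ 0) (hU : (hline a' P (P.2.1 + e)).2 ∈ U)
      (hfr : hline a' P (P.2.1 + e) ∈ frontier F) : a' = a :=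
    hF.slope_unique hψ hPU (hF.hline_mem_frontier hψ (y₁ := P.2.1) (by simpa using he)
      (by simpa using hPU) (by simpa using hP) hU hfr) ha
  rcases hF.hline_add_or_sub_mem_frontier hP hseg hmem with hfr | hfr
  · exact extend hsub hUr hfr
  · refine extend (neg_ne_zero.2 hsub) ?_ ?_
    · rwa [← neg_mul]
    · rwa [← sub_eq_add_neg]

theorem sq_sub_eq_mul_of_hline_mem_frontier (hF : LineMonotone F) (hψ : IsEpigraphOn F ψ U)
    {a₀ a₁ S₀ S₁ T₀ T₁ : ℝ} (hU : (0, T₀) ∈ U)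
    (h₀ : ∀ y, hline a₀ (S₀, 0, T₀) y ∈ frontier F)
    (h₁ : ∀ y, hline a₁ (S₁, 0, T₁) y ∈ frontier F) :
    (S₁ - S₀) ^ 2 = (T₁ - T₀) * (a₁ - a₀) := by
  by_contra hne
  obtain ⟨y, hyU, hy⟩ : ∃ y, (hline a₀ (S₀, 0, T₀) y).2 ∈ U ∧
      S₁ - S₀ + y * (a₁ - a₀) ≠ 0 := by
    rcases eq_or_ne S₁ S₀ with rfl | hS
    · have ha : a₁ - a₀ ≠ 0 := by rintro ha; simp [ha] at hne
      obtain ⟨y, hyU, hy⟩ := ((eventually_hline_snd_mem hψ.isOpen (a := a₀) (P := (S₁, 0, T₀))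
        continuous_id (x := 0) (by simpa [hline] using hU)).filter_mono nhdsWithin_le_nhds |>.and
          self_mem_nhdsWithin : ∀ᶠ y in 𝓝[≠] (0 : ℝ), _ ∧ _).exists
      exact ⟨y, hyU, by simpa [ha] using hy⟩
    · exact ⟨0, by simpa [hline] using hU, by simpa [sub_eq_zero] using hS⟩
  -- `x` is chosen so that the points over `y` and `x` of the two lines lie on a horizontal line.
  obtain ⟨x, hx⟩ : ∃ x, T₁ - T₀ + (x + y) * (S₁ - S₀) + x * y * (a₁ - a₀) = 0 :=
    ⟨-(T₁ - T₀ + y * (S₁ - S₀)) / (S₁ - S₀ + y * (a₁ - a₀)), by field_simp; ring⟩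
  rcases eq_or_ne x y with rfl | hxy
  · have hsnd : (hline a₁ (S₁, 0, T₁) x).2 = (hline a₀ (S₀, 0, T₀) x).2 := by
      simp only [hline, Prod.mk.injEq, true_and]
      linear_combination hx
    have hfst : (hline a₀ (S₀, 0, T₀) x).1 = (hline a₁ (S₁, 0, T₁) x).1 := by
      rw [← hψ.apply_snd_eq_fst hyU (h₀ x), ← hψ.apply_snd_eq_fst (hsnd ▸ hyU) (h₁ x), hsnd]
    simp only [hline] at hfst
    exact hy (by linear_combination -hfst)
  · obtain ⟨a, ha⟩ := exists_hline_eq (P := hline a₀ (S₀, 0, T₀) y) (Q := hline a₁ (S₁, 0, T₁) x)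
      hxy (by simp only [hline]; linear_combination hx)
    have haa₀ : a = a₀ := hF.slope_eq_of_hline_mem_frontier hψ hyU (by simpa using h₀) hxy
      (ha ▸ h₁ x)
    have hS : S₁ - S₀ + x * (a₁ - a₀) = 0 := by
      have hfst : (hline a₀ (S₀, 0, T₀) x).1 = (hline a₁ (S₁, 0, T₁) x).1 := by
        rw [← ha, haa₀, hline_hline]
        rfl
      simp only [hline] at hfst
      linear_combination -hfst
    exact hne (by linear_combination (S₁ - S₀ + y * (a₁ - a₀)) * hS - (a₁ - a₀) * hx)

theorem exists_hline_mem_frontier (hF : LineMonotone F) (hψ : IsEpigraphOn F ψ U) {w : ℝ × ℝ}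
    (hw : w ∈ U) : ∃ a, ∀ y, hline a (ψ w, w) y ∈ frontier F := by
  obtain ⟨h, hh, t, htU, ht⟩ := exists_sub_eq_mul_add hψ.isOpen hψ.continuousOn hw
  obtain ⟨a, ha⟩ := exists_hline_eq (P := (ψ w, w)) (Q := (ψ (w.1 + h, t), w.1 + h, t))
    (by simpa using hh) (by simpa using ht)
  refine ⟨a, hF.hline_mem_frontier hψ (y₁ := w.1) (y₂ := w.1 + h) (by simpa using hh) ?_ ?_
    (ha ▸ htU) (ha ▸ hψ.mk_mem_frontier htU)⟩
  · exact (hline_self a (ψ w, w)).symm ▸ hw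
  · exact (hline_self a (ψ w, w)).symm ▸ hψ.mk_mem_frontier hw

theorem exists_planar (hF : LineMonotone F) (hψ : IsEpigraphOn F ψ U) (h0 : 0 ∈ U) :
    ∃ A B c : ℝ, ∀ w ∈ U, (1 - c * w.1) * ψ w = A + B * w.1 - c * w.2 := by
  obtain ⟨T₁, hT₁U, hT₁⟩ : ∃ T₁ : ℝ, (0, T₁) ∈ U ∧ T₁ ≠ 0 :=
    (((by fun_prop : Continuous fun T : ℝ => ((0 : ℝ), T)).continuousAt.eventually_mem
      (hψ.isOpen.mem_nhds h0)).filter_mono nhdsWithin_le_nhds |>.and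
        self_mem_nhdsWithin : ∀ᶠ T in 𝓝[≠] (0 : ℝ), _ ∧ _).exists
  obtain ⟨a₀, ha₀⟩ := hF.exists_hline_mem_frontier hψ h0
  obtain ⟨a₁, ha₁⟩ := hF.exists_hline_mem_frontier hψ hT₁U
  set S₀ := ψ 0
  set S₁ := ψ (0, T₁)
  set c := (S₁ - S₀) / (T₁ - 0)
  refine ⟨S₀, a₀ - c * S₀, -c, fun w hw => ?_⟩
  obtain ⟨a, ha⟩ := hF.exists_hline_mem_frontier hψ hw
  obtain ⟨S, T, hST⟩ : ∃ S T, hline a (ψ w, w) 0 = (S, 0, T) := ⟨_, _, rfl⟩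
  have ha' (y : ℝ) : hline a (S, 0, T) y ∈ frontier F := by
    rw [← hST, hline_hline]
    exact ha y
  obtain ⟨hS, hslope⟩ := sub_eq_mul_of_pairwise_sq_eq hT₁
    (hF.sq_sub_eq_mul_of_hline_mem_frontier hψ h0 ha₀ ha₁)
    (hF.sq_sub_eq_mul_of_hline_mem_frontier hψ h0 ha₀ ha')
    (hF.sq_sub_eq_mul_of_hline_mem_frontier hψ hT₁U ha₁ ha')
    (div_mul_cancel₀ _ (sub_ne_zero.2 hT₁)).symm
  have hw_eq : hline a (S, 0, T) w.1 = (ψ w, w) := by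
    rw [← hST, hline_hline]
    exact hline_self a (ψ w, w)
  have hψw : S + a * (w.1 - 0) = ψ w := congrArg Prod.fst hw_eq
  have hw₂ : T + (w.1 - 0) * (2 * S + a * (w.1 - 0)) = w.2 :=
    congrArg (fun P : ℝ × ℝ × ℝ => P.2.2) hw_eq
  rw [← hψw, ← hw₂]
  linear_combination (1 - c * w.1) * hS + w.1 * hslope

end LineMonotone

section Polarized

/-- Horizontal convexity in `ℍ × ℝ`, in polarized coordinates `(s, y, u, t)`: the horizontal curves
are those with `dt = 2 s dy`. -/
def PolConvex (C : Set (ℝ × ℝ × ℝ × ℝ)) : Prop :=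
  ∀ s y u t a b c : ℝ, (s, y, u, t) ∈ C → (s + a, y + b, u + c, t + b * (2 * s + a)) ∈ C →
    ∀ l ∈ Icc (0 : ℝ) 1, (s + l * a, y + l * b, u + l * c, t + l * b * (2 * s + l * a)) ∈ C

/-- The point over `P.1 + h` of the horizontal line through `P` along which `dy/ds = b` and
`du/ds = c`, in polarized coordinates. -/
def slant (b c : ℝ) (P : ℝ × ℝ × ℝ × ℝ) (h : ℝ) : ℝ × ℝ × ℝ × ℝ :=
  (P.1 + h, P.2.1 + b * h, P.2.2.1 + c * h, P.2.2.2 + b * h * (2 * P.1 + h))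

variable {C G : Set (ℝ × ℝ × ℝ × ℝ)} {φ : ℝ × ℝ × ℝ → ℝ} {U : Set (ℝ × ℝ × ℝ)}

@[fun_prop] theorem continuous_slant {X : Type*} [TopologicalSpace X] {b c h : X → ℝ}
    {P : X → ℝ × ℝ × ℝ × ℝ} (hb : Continuous b) (hc : Continuous c) (hP : Continuous P)
    (hh : Continuous h) : Continuous fun x => slant (b x) (c x) (P x) (h x) := by
  unfold slant
  fun_prop

theorem PolConvex.slant_mem (hC : PolConvex C) {b c k h : ℝ} {P : ℝ × ℝ × ℝ × ℝ} (hP : P ∈ C)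
    (hk : slant b c P k ∈ C) (hh : h ∈ uIcc 0 k) : slant b c P h ∈ C := by
  rw [← segment_eq_uIcc, segment_eq_image'] at hh
  obtain ⟨l, hl, rfl⟩ := hh
  convert hC P.1 P.2.1 P.2.2.1 P.2.2.2 k (b * k) (c * k) hP hk l hl using 1
  simp only [slant, smul_eq_mul, Prod.mk.injEq]
  refine ⟨?_, ?_, ?_, ?_⟩ <;> ring

theorem PolConvex.ordConnected_section (hC : PolConvex C) (w : ℝ × ℝ × ℝ) :
    {s | (s, w) ∈ C}.OrdConnected := by
  refine ordConnected_iff_uIcc_subset.2 fun s₁ hs₁ s₂ hs₂ s hs => ?_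
  have hslant (r : ℝ) : slant 0 0 (s₁, w) (r - s₁) = (r, w) := by simp [slant]
  have hmem : slant 0 0 (s₁, w) (s - s₁) ∈ C :=
    hC.slant_mem hs₁ (k := s₂ - s₁) (by rwa [hslant]) (by simpa [mem_uIcc] using hs)
  rwa [hslant] at hmem

-- Two consecutive moves along `slant` lines reach every nearby point over `s + 2h`.
theorem PolConvex.eventually_mem_of_slab (hC : PolConvex C) (hU : IsOpen U) {K s h : ℝ}
    (hK : ∀ w ∈ U, (K, w) ∈ C) (hh : h ≠ 0) (h2 : 2 * h ∈ uIcc 0 (K - s)) {w₀ : ℝ × ℝ × ℝ}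
    (hw₀ : w₀ ∈ U) : ∀ᶠ q in 𝓝 (w₀, w₀), (s, q.1) ∈ C → (s + 2 * h, q.2) ∈ C := by
  set b₂ : (ℝ × ℝ × ℝ) × (ℝ × ℝ × ℝ) → ℝ := fun q =>
    (q.2.2.2 - q.1.2.2 - (q.2.1 - q.1.1) * (2 * s + h)) / (2 * h ^ 2) with hb₂
  set b₁ : (ℝ × ℝ × ℝ) × (ℝ × ℝ × ℝ) → ℝ := fun q => (q.2.1 - q.1.1) / h - b₂ q with hb₁
  set c : (ℝ × ℝ × ℝ) × (ℝ × ℝ × ℝ) → ℝ := fun q => (q.2.2.1 - q.1.2.1) / (2 * h) with hc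
  set mid : (ℝ × ℝ × ℝ) × (ℝ × ℝ × ℝ) → ℝ × ℝ × ℝ × ℝ := fun q => slant (b₁ q) (c q) (s, q.1) h
    with hmid
  have hend (q) : slant (b₂ q) (c q) (mid q) h = (s + 2 * h, q.2) := by
    simp only [slant, hmid, hb₁, hb₂, hc, Prod.ext_iff]
    refine ⟨?_, ?_, ?_, ?_⟩ <;> field_simp <;> ring
  have hb₂0 : b₂ (w₀, w₀) = 0 := by simp [hb₂]
  have hb₁0 : b₁ (w₀, w₀) = 0 := by simp [hb₁, hb₂]
  have hc0 : c (w₀, w₀) = 0 := by simp [hc]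
  have hfirst : ∀ᶠ q in 𝓝 (w₀, w₀), (slant (b₁ q) (c q) (s, q.1) (K - s)).2 ∈ U := by
    refine ContinuousAt.eventually_mem (Continuous.continuousAt (by fun_prop)) (hU.mem_nhds ?_)
    simpa [hb₁0, hc0, slant] using hw₀
  have hsecond : ∀ᶠ q in 𝓝 (w₀, w₀), (slant (b₂ q) (c q) (mid q) (K - (s + h))).2 ∈ U := by
    refine ContinuousAt.eventually_mem (Continuous.continuousAt (by fun_prop)) (hU.mem_nhds ?_)
    simpa [hb₁0, hb₂0, hc0, hmid, slant] using hw₀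
  have hslab {b c : ℝ} {P : ℝ × ℝ × ℝ × ℝ} (hP : (slant b c P (K - P.1)).2 ∈ U) :
      slant b c P (K - P.1) ∈ C := by
    convert hK _ hP using 1
    simp [slant]
  filter_upwards [hfirst, hsecond] with q hq₁ hq₂ hq
  rw [mem_uIcc] at h2
  have hmidC : mid q ∈ C := hC.slant_mem hq (hslab hq₁) (mem_uIcc.2 (by grind))
  rw [← hend]
  exact hC.slant_mem hmidC (k := K - (s + h)) (hslab hq₂) (mem_uIcc.2 (by grind))

theorem PolConvex.eventually_mem_of_slab_of_mem (hC : PolConvex C) (hU : IsOpen U) {K s h : ℝ}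
    (hK : ∀ w ∈ U, (K, w) ∈ C) (hh : h ≠ 0) (h2 : 2 * h ∈ uIcc 0 (K - s)) {w₀ : ℝ × ℝ × ℝ}
    (hw₀ : w₀ ∈ U) (hs : (s, w₀) ∈ C) : ∀ᶠ w in 𝓝 w₀, (s + 2 * h, w) ∈ C :=
  (hC.eventually_mem_of_slab hU hK hh h2 hw₀).curry_nhds.self_of_nhds.mono fun _ hw => hw hs

theorem continuousOn_of_polConvex (hG : PolConvex G) (hG' : PolConvex Gᶜ) (hU : IsOpen U)
    {lo hi : ℝ} (hφ : ∀ w ∈ U, φ w ∈ Icc lo hi) (habove : ∀ w ∈ U, ∀ s, φ w < s → (s, w) ∈ G)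
    (hbelow : ∀ w ∈ U, ∀ s, s < φ w → (s, w) ∉ G) : ContinuousOn φ U := by
  intro w₀ hw₀
  have ⟨hlo, hhi⟩ := hφ w₀ hw₀
  refine ContinuousAt.continuousWithinAt (tendsto_order.2 ⟨fun r hr => ?_, fun r hr => ?_⟩)
  · have hslab : ∀ w ∈ U, (lo - (φ w₀ - r), w) ∈ Gᶜ := fun w hw =>
      hbelow w hw _ (by linarith [(hφ w hw).1])
    filter_upwards [hU.eventually_mem hw₀, hG'.eventually_mem_of_slab_of_mem hU hslab
      (s := φ w₀ - (φ w₀ - r) / 4) (h := -(φ w₀ - r) / 4) (by linarith)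
      (mem_uIcc.2 (.inr ⟨by linarith, by linarith⟩)) hw₀ (hbelow w₀ hw₀ _ (by linarith))]
      with w hwU hw
    by_contra! hle
    exact hw (habove w hwU _ (by linarith))
  · have hslab : ∀ w ∈ U, (hi + (r - φ w₀), w) ∈ G := fun w hw =>
      habove w hw _ (by linarith [(hφ w hw).2])
    filter_upwards [hU.eventually_mem hw₀, hG.eventually_mem_of_slab_of_mem hU hslab
      (s := φ w₀ + (r - φ w₀) / 4) (h := (r - φ w₀) / 4) (by linarith)
      (mem_uIcc.2 (.inl ⟨by linarith, by linarith⟩)) hw₀ (habove w₀ hw₀ _ (by linarith))]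
      with w hwU hw
    by_contra! hle
    exact hbelow w hwU _ (by linarith) hw

theorem PolConvex.eventually_notMem (hG : PolConvex G) (h0 : 0 ∈ closure Gᶜ) (hU : IsOpen U)
    (h0U : 0 ∈ U) (hslab : ∀ w ∈ U, (1, w) ∈ G) : ∀ᶠ w in 𝓝 0, (-3, w) ∉ G := by
  have hmove := hG.eventually_mem_of_slab hU hslab (s := -3) one_ne_zero
    (mem_uIcc.2 (.inl (by norm_num))) h0U
  rw [nhds_prod_eq] at hmove
  obtain ⟨p, hp, p', hp', hmove⟩ := eventually_prod_iff.1 hmove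
  have hsnd : Tendsto (Prod.snd : ℝ × ℝ × ℝ × ℝ → ℝ × ℝ × ℝ) (𝓝 0) (𝓝 0) :=
    continuous_snd.tendsto 0
  have hnear : ∀ᶠ Q in 𝓝 (0 : ℝ × ℝ × ℝ × ℝ), Q.1 ∈ Icc (-1) 1 ∧ Q.2 ∈ U ∧ p' Q.2 :=
    (continuousAt_fst.eventually_mem (Icc_mem_nhds (by simp) (by simp))).and
      (hsnd.eventually ((hU.eventually_mem h0U).and hp'))
  obtain ⟨Q, hQG, hQ₁, hQU, hQp⟩ :=
    ((mem_closure_iff_frequently.1 h0).and_eventually hnear).exists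
  filter_upwards [hp] with w hw hwG
  have hQlow : (-1, Q.2) ∈ G := by
    convert hmove hw hQp hwG using 2
    norm_num
  exact hQG ((hG.ordConnected_section Q.2).out hQlow (hslab _ hQU) hQ₁)

theorem exists_isEpigraphOn (hG : PolConvex G) (hG' : PolConvex Gᶜ) (h0 : 0 ∈ closure Gᶜ)
    (h1 : (1, 0) ∈ interior G) : ∃ φ U, 0 ∈ U ∧ IsEpigraphOn G φ U := by
  set V := {w : ℝ × ℝ × ℝ | (1, w) ∈ interior G}
  have hV : IsOpen V := isOpen_interior.preimage (by fun_prop)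
  have hVG : ∀ w ∈ V, (1, w) ∈ G := fun w hw => interior_subset hw
  obtain ⟨W, hWG, hW, h0W⟩ := eventually_nhds_iff.1 (hG.eventually_notMem h0 hV h1 hVG)
  have hthreshold : ∀ w ∈ V ∩ W, ∃ r ∈ Icc (-3 : ℝ) 1, (∀ s, r < s → (s, w) ∈ G) ∧
      ∀ s, s < r → (s, w) ∉ G := fun w hw =>
    exists_threshold_of_ordConnected (hG.ordConnected_section w) (hG'.ordConnected_section w)
      (hWG w hw.2) (hVG w hw.1) (by norm_num)
  choose! φ hφ using hthreshold
  exact ⟨φ, V ∩ W, ⟨h1, h0W⟩,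
    { isOpen := hV.inter hW
      continuousOn := continuousOn_of_polConvex hG hG' (hV.inter hW) (fun w hw => (hφ w hw).1)
        (fun w hw => (hφ w hw).2.1) (fun w hw => (hφ w hw).2.2)
      mem_of_lt := fun hw _ => (hφ _ hw).2.1 _
      notMem_of_lt := fun hw _ => (hφ _ hw).2.2 _ }⟩

theorem exists_affine_of_polConvex (hG : PolConvex G) (hG' : PolConvex Gᶜ)
    (hφ : IsEpigraphOn G φ U) {y t m : ℝ} (hm : 0 < m) (hU : ∀ u ∈ Icc (-m) m, (y, u, t) ∈ U) :
    ∃ α β : ℝ, ∀ u ∈ Icc (-m) m, φ (y, u, t) = α + β * u := by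
  set fl := φ (y, -m, t)
  set fr := φ (y, m, t)
  have hUl : (y, -m, t) ∈ U := hU _ ⟨le_rfl, by linarith⟩
  have hUr : (y, m, t) ∈ U := hU _ ⟨by linarith, le_rfl⟩
  refine ⟨(fl + fr) / 2, (fr - fl) / (2 * m), fun u hu => ?_⟩
  obtain ⟨l, hl, rfl⟩ : ∃ l ∈ Icc (0 : ℝ) 1, -m + l * (m - -m) = u := by
    rwa [← segment_eq_Icc (by linarith), segment_eq_image'] at hu
  have hmix {C : Set (ℝ × ℝ × ℝ × ℝ)} (hC : PolConvex C) {ε : ℝ} (hCl : (fl + ε, y, -m, t) ∈ C)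
      (hCr : (fr + ε, y, m, t) ∈ C) : (fl + ε + l * (fr - fl), y, -m + l * (m - -m), t) ∈ C := by
    simpa using hC (fl + ε) y (-m) t (fr - fl) 0 (m - -m) hCl
      (by convert hCr using 2 <;> [ring; simp]) l hl
  have heq : (fl + fr) / 2 + (fr - fl) / (2 * m) * (-m + l * (m - -m)) = fl + l * (fr - fl) := by
    field_simp
    ring
  rw [heq]
  refine le_antisymm (le_of_forall_pos_le_add fun ε hε => ?_)
    (le_of_forall_pos_le_add fun ε hε => ?_)
  · by_contra! hlt
    exact hφ.notMem_of_lt (hU _ hu) (by linarith)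
      (hmix hG (hφ.mem_of_lt hUl (lt_add_of_pos_right _ hε))
        (hφ.mem_of_lt hUr (lt_add_of_pos_right _ hε)))
  · by_contra! hlt
    exact hmix hG' (hφ.notMem_of_lt hUl (add_lt_of_neg_right _ (neg_lt_zero.2 hε)))
      (hφ.notMem_of_lt hUr (add_lt_of_neg_right _ (neg_lt_zero.2 hε)))
      (hφ.mem_of_lt (hU _ hu) (by linarith))

theorem PolConvex.lineConvex_slice (hC : PolConvex C) (k : ℝ) :
    LineConvex (Prod.map id (fun w : ℝ × ℝ => (w.1, k * w.1, w.2)) ⁻¹' C) := by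
  intro a P
  have hslice (y : ℝ) :
      y ∈ hline a P ⁻¹' (Prod.map id (fun w : ℝ × ℝ => (w.1, k * w.1, w.2)) ⁻¹' C) ↔
        ((hline a P y).1, y, k * y, (hline a P y).2.2) ∈ C := Iff.rfl
  refine ordConnected_iff_uIcc_subset.2 fun x hx z hz y hy => ?_
  rw [← segment_eq_uIcc, segment_eq_image'] at hy
  obtain ⟨θ, hθ, rfl⟩ := hy
  rw [hslice] at hx hz ⊢
  have hz' : ((hline a P x).1 + a * (z - x), x + (z - x), k * x + k * (z - x),
      (hline a P x).2.2 + (z - x) * (2 * (hline a P x).1 + a * (z - x))) ∈ C := by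
    convert hz using 1
    simp only [hline, Prod.mk.injEq]
    refine ⟨?_, ?_, ?_, ?_⟩ <;> ring
  convert hC _ _ _ _ _ _ _ hx hz' θ hθ using 1
  simp only [hline, smul_eq_mul, Prod.mk.injEq, true_and]
  refine ⟨?_, ?_, ?_⟩ <;> ring

theorem exists_planar_slice (hG : PolConvex G) (hG' : PolConvex Gᶜ) (hφ : IsEpigraphOn G φ U)
    (h0 : 0 ∈ U) (k : ℝ) : ∃ A B c : ℝ, ∀ y t, (y, k * y, t) ∈ U →
      (1 - c * y) * φ (y, k * y, t) = A + B * y - c * t := by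
  obtain ⟨A, B, c, h⟩ := LineMonotone.exists_planar
    ⟨hG.lineConvex_slice k, hG'.lineConvex_slice k⟩
    (hφ.comp (g := fun w : ℝ × ℝ => (w.1, k * w.1, w.2)) (by fun_prop))
    (show ((0 : ℝ), k * 0, (0 : ℝ)) ∈ U by rw [mul_zero]; exact h0)
  exact ⟨A, B, c, fun y t hyt => h (y, t) hyt⟩

-- All slices `u = k y` meet in `y = u = 0`, where they determine `A` and `c`.
theorem exists_common_planar_slice (hG : PolConvex G) (hG' : PolConvex Gᶜ)
    (hφ : IsEpigraphOn G φ U) (h0 : 0 ∈ U) : ∃ A c : ℝ, ∀ k, ∃ B, ∀ y t, (y, k * y, t) ∈ U →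
      (1 - c * y) * φ (y, k * y, t) = A + B * y - c * t := by
  obtain ⟨A, B, c, h⟩ := exists_planar_slice hG hG' hφ h0 0
  refine ⟨A, c, fun k => ?_⟩
  obtain ⟨A', B', c', h'⟩ := exists_planar_slice hG hG' hφ h0 k
  obtain ⟨t, htU, ht⟩ : ∃ t : ℝ, (0, 0, t) ∈ U ∧ t ≠ 0 :=
    (((by fun_prop : Continuous fun t : ℝ => ((0 : ℝ), (0 : ℝ), t)).continuousAt.eventually_mem
      (hφ.isOpen.mem_nhds h0)).filter_mono nhdsWithin_le_nhds |>.and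
        self_mem_nhdsWithin : ∀ᶠ t in 𝓝[≠] (0 : ℝ), _ ∧ _).exists
  have haxis {t : ℝ} (ht : (0, 0, t) ∈ U) : A - c * t = A' - c' * t := by
    have hk := h' 0 t (by simpa using ht)
    have h₀ := h 0 t (by simpa using ht)
    simp only [mul_zero, sub_zero, one_mul, add_zero] at hk h₀
    exact h₀.symm.trans hk
  have hA : A = A' := by simpa using haxis h0
  have hc : c = c' := mul_right_cancel₀ ht (by linear_combination hA - haxis htU)
  exact ⟨B', by rw [hA, hc]; exact h'⟩

theorem mul_eq_of_planar_slices (hG : PolConvex G) (hG' : PolConvex Gᶜ) (hφ : IsEpigraphOn G φ U)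
    {A B₀ B₁ c : ℝ} (h₀ : ∀ y t, (y, 0, t) ∈ U → (1 - c * y) * φ (y, 0, t) = A + B₀ * y - c * t)
    (h₁ : ∀ y t, (y, y, t) ∈ U → (1 - c * y) * φ (y, y, t) = A + B₁ * y - c * t) {y u t : ℝ}
    (hy : y ≠ 0) (hU : ∀ v ∈ Icc (-max |y| |u|) (max |y| |u|), (y, v, t) ∈ U) :
    (1 - c * y) * φ (y, u, t) = A + B₀ * y + (B₁ - B₀) * u - c * t := by
  have hm : 0 < max |y| |u| := lt_max_of_lt_left (abs_pos.2 hy)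
  have huI : u ∈ Icc (-max |y| |u|) (max |y| |u|) := abs_le.1 (le_max_right _ _)
  have hyI : y ∈ Icc (-max |y| |u|) (max |y| |u|) := abs_le.1 (le_max_left _ _)
  have h0I : 0 ∈ Icc (-max |y| |u|) (max |y| |u|) := ⟨by linarith, hm.le⟩
  obtain ⟨α, β, hαβ⟩ := exists_affine_of_polConvex hG hG' hφ hm hU
  have hα : (1 - c * y) * (α + β * 0) = A + B₀ * y - c * t := hαβ 0 h0I ▸ h₀ y t (hU 0 h0I)
  have hβ : (1 - c * y) * (α + β * y) = A + B₁ * y - c * t := hαβ y hyI ▸ h₁ y t (hU y hyI)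
  refine mul_left_cancel₀ hy ?_
  rw [hαβ u huI]
  linear_combination (y - u) * hα + u * hβ

theorem exists_planar_of_polConvex (hG : PolConvex G) (hG' : PolConvex Gᶜ)
    (hφ : IsEpigraphOn G φ U) (h0 : 0 ∈ U) : ∃ A B C c : ℝ, ∀ᶠ w in 𝓝 0,
      (1 - c * w.1) * φ w = A + B * w.1 + C * w.2.1 - c * w.2.2 := by
  obtain ⟨A, c, hslice⟩ := exists_common_planar_slice hG hG' hφ h0
  obtain ⟨B₀, h₀⟩ := hslice 0
  obtain ⟨B₁, h₁⟩ := hslice 1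
  simp only [zero_mul, one_mul] at h₀ h₁
  obtain ⟨ρ, hρ, hρU⟩ := Metric.isOpen_iff.1 hφ.isOpen 0 h0
  have mem_ball {y u t : ℝ} : (y, u, t) ∈ Metric.ball (0 : ℝ × ℝ × ℝ) ρ ↔
      |y| < ρ ∧ |u| < ρ ∧ |t| < ρ := by
    simp [Prod.norm_def]
  refine ⟨A, B₀, B₁ - B₀, c, ?_⟩
  have hoff : EqOn (fun w => (1 - c * w.1) * φ w)
      (fun w => A + B₀ * w.1 + (B₁ - B₀) * w.2.1 - c * w.2.2)
      (Metric.ball 0 ρ ∩ Prod.fst ⁻¹' {0}ᶜ) := by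
    rintro ⟨y, u, t⟩ ⟨hw, hy : y ≠ 0⟩
    obtain ⟨hyρ, huρ, htρ⟩ := mem_ball.1 hw
    exact mul_eq_of_planar_slices hG hG' hφ h₀ h₁ hy fun v hv =>
      hρU (mem_ball.2 ⟨hyρ, (abs_le.2 hv).trans_lt (max_lt hyρ huρ), htρ⟩)
  have hdense : Dense (Prod.fst ⁻¹' {0}ᶜ : Set (ℝ × ℝ × ℝ)) :=
    (dense_compl_singleton 0).preimage isOpenMap_fst
  have hcont : ContinuousOn φ (Metric.ball 0 ρ) := hφ.continuousOn.mono hρU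
  filter_upwards [Metric.ball_mem_nhds 0 hρ] with w hw
  exact hoff.of_subset_closure (by fun_prop) (by fun_prop) inter_subset_left
    (hdense.open_subset_closure_inter Metric.isOpen_ball) hw

theorem exists_mem_frontier_iff_planar (hG : PolConvex G) (hG' : PolConvex Gᶜ) (h0 : 0 ∈ frontier G)
    (h1 : (1, 0) ∈ interior G) : ∃ B C c : ℝ, ∀ᶠ w in 𝓝 0, ∀ s, (s, w) ∈ frontier G ↔
      s - c * (w.1 * s - w.2.2) = B * w.1 + C * w.2.1 := by
  have h0' : 0 ∈ closure Gᶜ := frontier_subset_closure (frontier_compl G ▸ h0)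
  obtain ⟨φ, U, h0U, hφ⟩ := exists_isEpigraphOn hG hG' h0' h1
  obtain ⟨A, B, C, c, hplane⟩ := exists_planar_of_polConvex hG hG' hφ h0U
  have hA : A = 0 := by
    simpa [(hφ.mk_mem_frontier_iff h0U).1 h0] using hplane.self_of_nhds.symm
  have hc : ∀ᶠ w : ℝ × ℝ × ℝ in 𝓝 0, 1 - c * w.1 ≠ 0 :=
    (by fun_prop : Continuous fun w : ℝ × ℝ × ℝ => 1 - c * w.1).continuousAt.eventually_ne (by simp)
  refine ⟨B, C, c, ?_⟩
  filter_upwards [hplane, hc, hφ.isOpen.eventually_mem h0U] with w hw hcw hwU s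
  rw [hφ.mk_mem_frontier_iff hwU, ← mul_right_inj' hcw, hw, hA]
  grind

end Polarized

section Chart

/-- Polarized coordinates `(s, y, u, t)` on `ℍ × ℝ` adapted to `(p, q)`: the `s`-axis is the
horizontal line through the origin and `(p, q, 0, 0)`. -/
def polarChart (p q : ℝ) (hpq : p ^ 2 + q ^ 2 ≠ 0) : ℝ × ℝ × ℝ × ℝ ≃ₜ (Fin 4 → ℝ) where
  toFun P := ![P.1 * p - P.2.1 * q, P.1 * q + P.2.1 * p, P.2.2.1,
    2 * (p ^ 2 + q ^ 2) * (P.2.1 * P.1 - P.2.2.2)]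
  invFun v := ((v 0 * p + v 1 * q) / (p ^ 2 + q ^ 2), (v 1 * p - v 0 * q) / (p ^ 2 + q ^ 2), v 2,
    (v 1 * p - v 0 * q) / (p ^ 2 + q ^ 2) * ((v 0 * p + v 1 * q) / (p ^ 2 + q ^ 2)) -
      v 3 / (2 * (p ^ 2 + q ^ 2)))
  left_inv P := by
    simp only [Matrix.cons_val, Prod.ext_iff, true_and]
    refine ⟨?_, ?_, ?_⟩ <;> field_simp <;> ring
  right_inv v := by
    ext i
    fin_cases i <;> simp <;> field_simp <;> ring
  continuous_toFun := by fun_prop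
  continuous_invFun := by fun_prop

variable {p q : ℝ} (hpq : p ^ 2 + q ^ 2 ≠ 0)

theorem polarChart_apply (s y u t : ℝ) : polarChart p q hpq (s, y, u, t) =
    ![s * p - y * q, s * q + y * p, u, 2 * (p ^ 2 + q ^ 2) * (y * s - t)] := rfl

theorem polarChart_zero : polarChart p q hpq 0 = 0 := by
  simp [← Prod.mk_zero_zero, polarChart_apply]

theorem polarChart_one_zero : polarChart p q hpq (1, 0) = ![p, q, 0, 0] := by
  simp [← Prod.mk_zero_zero, polarChart_apply]

theorem polarChart_add (s y u t a b c l : ℝ) :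
    polarChart p q hpq (s + l * a, y + l * b, u + l * c, t + l * b * (2 * s + l * a)) =
      hmul (polarChart p q hpq (s, y, u, t))
        ![l * (a * p - b * q), l * (a * q + b * p), l * c, 0] := by
  ext i
  fin_cases i <;> simp [polarChart_apply, hmul] <;> ring

theorem HRConvex.polConvex_preimage {C : Set (Fin 4 → ℝ)} (hC : HRConvex C) :
    PolConvex (polarChart p q hpq ⁻¹' C) := by
  intro s y u t a b c hP hQ l hl
  have hend := polarChart_add hpq s y u t a b c 1
  simp only [one_mul] at hend
  rw [mem_preimage, hend] at hQ
  rw [mem_preimage, polarChart_add]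
  exact hC _ hP _ _ _ hQ l hl.1 hl.2

theorem plane_polarChart (B C c s y u t : ℝ) :
    let v := polarChart p q hpq (s, y, u, t)
    (p + B * q) / (p ^ 2 + q ^ 2) * v 0 + (q - B * p) / (p ^ 2 + q ^ 2) * v 1 + -C * v 2 +
      -c / (2 * (p ^ 2 + q ^ 2)) * v 3 = s - c * (y * s - t) - (B * y + C * u) := by
  simp only [polarChart_apply, Matrix.cons_val]
  field_simp
  ring

end Chart

/-- **Monotone `(pX+qY)`-epigraphs (local statement):** near the origin the boundary
of `E` coincides with a plane `rx + sy + cu + bt = 0` not containing `(p,q,0,0)`. -/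
theorem monotone_epigraph_local
    (E : Set (Fin 4 → ℝ)) (hE : PreciselyMonotone E)
    (h0 : (0 : Fin 4 → ℝ) ∈ frontier E)
    (p q : ℝ) (hpq : (p, q) ≠ ((0 : ℝ), (0 : ℝ)))
    (hint : (![p, q, 0, 0] : Fin 4 → ℝ) ∈ interior E) :
    ∃ Ω : Set (Fin 4 → ℝ), IsOpen Ω ∧ (0 : Fin 4 → ℝ) ∈ Ω ∧
      ∃ r s c b : ℝ, r * p + s * q ≠ 0 ∧
        frontier E ∩ Ω =
          {v : Fin 4 → ℝ | r * v 0 + s * v 1 + c * v 2 + b * v 3 = 0} ∩ Ω := by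
  have hN : p ^ 2 + q ^ 2 ≠ 0 := fun h =>
    hpq (Prod.ext (by nlinarith : p = 0) (by nlinarith : q = 0))
  set χ := polarChart p q hN
  obtain ⟨B, C, c, hplane⟩ := exists_mem_frontier_iff_planar (G := χ ⁻¹' E)
    (hE.1.polConvex_preimage hN) (hE.2.polConvex_preimage hN)
    (by rwa [← χ.preimage_frontier, mem_preimage, polarChart_zero])
    (by rwa [← χ.preimage_interior, mem_preimage, polarChart_one_zero])
  obtain ⟨W, hW, hWo, h0W⟩ := eventually_nhds_iff.1 hplane
  refine ⟨χ '' (Prod.snd ⁻¹' W), χ.isOpenMap _ (hWo.preimage continuous_snd),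
    ⟨0, h0W, polarChart_zero hN⟩, (p + B * q) / (p ^ 2 + q ^ 2), (q - B * p) / (p ^ 2 + q ^ 2), -C,
    -c / (2 * (p ^ 2 + q ^ 2)), ?_, ?_⟩
  · have hone : (p + B * q) / (p ^ 2 + q ^ 2) * p + (q - B * p) / (p ^ 2 + q ^ 2) * q = 1 := by
      field_simp
      ring
    exact hone ▸ one_ne_zero
  · ext v
    simp only [mem_inter_iff, and_congr_left_iff]
    rintro ⟨⟨s, y, u, t⟩, hwW, rfl⟩
    rw [← mem_preimage, χ.preimage_frontier, hW _ hwW, mem_ofPred_eq, plane_polarChart,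
      sub_eq_zero]
end
end
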